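/- arXiv:1601.05906 — 2 statements merged into one kernel-verified Lean document; each statement's English description precedes it below -/
import Mathlib

section
/- Let m ≥ 2. In the algebra ℂ[sl_{2m}] of polynomial functions on sl_{2m}(ℂ), let I be the ideal generated by the entries of the matrix-valued polynomial map X ↦ X² − (tr(X²)/2m)·I_{2m} (equivalently, by all functions X ↦ tr(A·X²) with A a traceless 2m×2m matrix). Then I is a prime ideal; consequently I equals the full ideal of polynomial functions vanishing on the Zariski closure of the cone {t·g·D·g⁻¹ : t ∈ ℂ∖{0}, g ∈ GL_{2m}(ℂ)}, where D is the diagonal matrix diag(1,…,1,−1,…,−1) with m ones and m minus-ones. -/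
open Matrix

noncomputable section

abbrev Mat (n : ℕ) := Matrix (Fin n) (Fin n) ℂ

abbrev GLn (n : ℕ) := Matrix.GeneralLinearGroup (Fin n) ℂ

/-- The set of traceless `n×n` complex matrices, i.e. `sl_n(ℂ)`. -/
def slS (n : ℕ) : Set (Mat n) := {X | X.trace = 0}

/-- The algebra `ℂ[sl_n]` of polynomial functions on `sl_n(ℂ)`: the subalgebra of all
functions `sl_n → ℂ` generated by the matrix-entry coordinate functions. -/
def polyFns (n : ℕ) : Subalgebra ℂ (↥(slS n) → ℂ) :=
  Algebra.adjoin ℂ {p | ∃ i j : Fin n, p = fun X => X.1 i j}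

/-- A subset of `sl_n(ℂ)` is Zariski closed if it is the common zero locus of a family of
polynomial functions on `sl_n(ℂ)`. -/
def slZclosed (n : ℕ) (C : Set ↥(slS n)) : Prop :=
  ∃ T : Set (↥(slS n) → ℂ), T ⊆ (polyFns n : Set (↥(slS n) → ℂ)) ∧
    C = {X | ∀ p ∈ T, p X = 0}

/-- The Zariski closure of a subset of `sl_n(ℂ)`. -/
def slZclosure (n : ℕ) (C : Set ↥(slS n)) : Set ↥(slS n) :=
  ⋂₀ {D | slZclosed n D ∧ C ⊆ D}



set_option linter.unusedSectionVars false
set_option linter.style.haveILetI false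

namespace SqZ
open MvPolynomial

section ip
variable {σ : Type} [Fintype σ] [DecidableEq σ]

/-- The factorial of a multi-index. -/
def mfac (M : σ →₀ ℕ) : ℂ := ∏ i, ((M i).factorial : ℂ)

/-- The Fischer Hermitian product. -/
def ip (F G : MvPolynomial σ ℂ) : ℂ :=
  ∑ M ∈ F.support, mfac M * star (coeff M F) * coeff M G

theorem ip_eq_sum (F G : MvPolynomial σ ℂ) (s : Finset (σ →₀ ℕ)) (h : F.support ⊆ s) :
    ip F G = ∑ M ∈ s, mfac M * star (coeff M F) * coeff M G := by
  unfold ip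
  apply Finset.sum_subset h
  intro M _ hM
  rw [notMem_support_iff.mp hM]
  simp

theorem star_mfac (M : σ →₀ ℕ) : star (mfac M) = mfac M := by
  simp [mfac]

theorem ip_conj (F G : MvPolynomial σ ℂ) : star (ip F G) = ip G F := by
  rw [ip_eq_sum F G (F.support ∪ G.support) Finset.subset_union_left,
    ip_eq_sum G F (F.support ∪ G.support) Finset.subset_union_right, star_sum]
  refine Finset.sum_congr rfl fun M _ => ?_
  rw [star_mul', star_mul', star_mfac, star_star]
  ring

theorem ip_add_right (F G H : MvPolynomial σ ℂ) : ip F (G + H) = ip F G + ip F H := by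
  simp [ip, mul_add, Finset.sum_add_distrib]

theorem ip_smul_right (c : ℂ) (F G : MvPolynomial σ ℂ) : ip F (c • G) = c * ip F G := by
  simp only [ip, Finset.mul_sum, coeff_smul, smul_eq_mul]
  exact Finset.sum_congr rfl fun M _ => by ring

/-- The Fischer product as a linear map in the second variable. -/
def ipR (F : MvPolynomial σ ℂ) : MvPolynomial σ ℂ →ₗ[ℂ] ℂ where
  toFun := ip F
  map_add' := ip_add_right F
  map_smul' c G := by simp [ip_smul_right]

theorem ip_zero_right (F : MvPolynomial σ ℂ) : ip F 0 = 0 := (ipR F).map_zero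

theorem ip_sub_right (F G H : MvPolynomial σ ℂ) : ip F (G - H) = ip F G - ip F H :=
  (ipR F).map_sub G H

theorem ip_sum_right {ι : Type} (s : Finset ι) (F : MvPolynomial σ ℂ)
    (G : ι → MvPolynomial σ ℂ) : ip F (∑ i ∈ s, G i) = ∑ i ∈ s, ip F (G i) :=
  map_sum (ipR F) G s

theorem ip_add_left (F G H : MvPolynomial σ ℂ) : ip (F + G) H = ip F H + ip G H := by
  rw [← ip_conj, ip_add_right, star_add, ip_conj, ip_conj]

theorem ip_sub_left (F G H : MvPolynomial σ ℂ) : ip (F - G) H = ip F H - ip G H := by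
  rw [← ip_conj, ip_sub_right, star_sub, ip_conj, ip_conj]

theorem ip_smul_left (c : ℂ) (F G : MvPolynomial σ ℂ) : ip (c • F) G = star c * ip F G := by
  rw [← ip_conj, ip_smul_right, star_mul', ip_conj]

theorem ip_zero_left (F : MvPolynomial σ ℂ) : ip 0 F = 0 := by
  rw [← ip_conj, ip_zero_right, star_zero]

theorem ip_sum_left {ι : Type} (s : Finset ι) (F : ι → MvPolynomial σ ℂ)
    (G : MvPolynomial σ ℂ) : ip (∑ i ∈ s, F i) G = ∑ i ∈ s, ip (F i) G := by
  rw [← ip_conj, ip_sum_right, star_sum]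
  exact Finset.sum_congr rfl fun i _ => ip_conj _ _

/-- A real version of the factorial of a multi-index. -/
def mfacR (M : σ →₀ ℕ) : ℝ := ∏ i, ((M i).factorial : ℝ)

theorem mfacR_pos (M : σ →₀ ℕ) : 0 < mfacR M :=
  Finset.prod_pos fun i _ => by exact_mod_cast Nat.factorial_pos _

theorem mfac_eq (M : σ →₀ ℕ) : mfac M = (mfacR M : ℂ) := by
  simp [mfac, mfacR]

theorem ip_self (F : MvPolynomial σ ℂ) :
    ip F F = ((∑ M ∈ F.support, mfacR M * ‖coeff M F‖ ^ 2 : ℝ) : ℂ) := by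
  unfold ip
  push_cast
  refine Finset.sum_congr rfl fun M _ => ?_
  rw [mfac_eq, mul_assoc]
  congr 1
  exact RCLike.conj_mul (coeff M F)

theorem ip_self_nonneg (F : MvPolynomial σ ℂ) : 0 ≤ (ip F F).re := by
  rw [ip_self, Complex.ofReal_re]
  exact Finset.sum_nonneg fun M _ => mul_nonneg (mfacR_pos M).le (sq_nonneg _)

theorem ip_definite (F : MvPolynomial σ ℂ) (h : ip F F = 0) : F = 0 := by
  rw [ip_self, Complex.ofReal_eq_zero,
    Finset.sum_eq_zero_iff_of_nonneg
      (fun M _ => mul_nonneg (mfacR_pos M).le (sq_nonneg _))] at h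
  ext M
  by_contra hM
  have := h M (mem_support_iff.mpr hM)
  rcases mul_eq_zero.mp this with h1 | h1
  · exact (mfacR_pos M).ne' h1
  · simp at h1
    exact hM h1

theorem ip_monomial_left (M : σ →₀ ℕ) (c : ℂ) (G : MvPolynomial σ ℂ) :
    ip (monomial M c) G = mfac M * star c * coeff M G := by
  rw [ip_eq_sum _ _ {M} support_monomial_subset]
  simp

theorem mfac_add_single (M : σ →₀ ℕ) (i : σ) :
    mfac (M + Finsupp.single i 1) = mfac M * (M i + 1) := by
  unfold mfac
  rw [← Finset.mul_prod_erase _ _ (Finset.mem_univ i),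
    ← Finset.mul_prod_erase _ _ (Finset.mem_univ i)]
  have : ∏ x ∈ Finset.univ.erase i, ((((M + Finsupp.single i 1 : σ →₀ ℕ) x).factorial : ℕ) : ℂ)
      = ∏ x ∈ Finset.univ.erase i, ((M x).factorial : ℂ) := by
    refine Finset.prod_congr rfl fun x hx => ?_
    have hx' := (Finset.mem_erase.mp hx).1
    simp [Finsupp.single_eq_of_ne hx']
  rw [this]
  simp [Nat.factorial_succ]
  ring

theorem ip_X_mul (i : σ) (F G : MvPolynomial σ ℂ) :
    ip (X i * F) G = ip F (pderiv i G) := by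
  induction F using MvPolynomial.induction_on' with
  | monomial M c =>
    rw [ip_monomial_left, coeff_pderiv, X, monomial_mul, ip_monomial_left, add_comm,
      mfac_add_single]
    simp
    ring
  | add p q hp hq => rw [mul_add, ip_add_left, ip_add_left, hp, hq]

theorem ip_mul_X (i : σ) (F G : MvPolynomial σ ℂ) :
    ip F (X i * G) = ip (pderiv i F) G := by
  rw [← ip_conj, ip_X_mul, ip_conj]

/-- The Fischer product as an inner product core. -/
def ipCore : InnerProductSpace.Core ℂ (MvPolynomial σ ℂ) where
  inner := ip
  conj_inner_symm x y := ip_conj y x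
  re_inner_nonneg x := ip_self_nonneg x
  add_left x y z := ip_add_left x y z
  smul_left x y r := ip_smul_left r x y
  definite x h := ip_definite x h

theorem exists_proj (W : Submodule ℂ (MvPolynomial σ ℂ)) [FiniteDimensional ℂ W]
    (f : MvPolynomial σ ℂ) : ∃ p ∈ W, ∀ q ∈ W, ip (f - p) q = 0 := by
  letI c : InnerProductSpace.Core ℂ (MvPolynomial σ ℂ) := ipCore
  letI : NormedAddCommGroup (MvPolynomial σ ℂ) := c.toNormedAddCommGroup
  letI : InnerProductSpace ℂ (MvPolynomial σ ℂ) := InnerProductSpace.ofCore c.toCore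
  refine ⟨W.starProjection f, Submodule.starProjection_apply_mem W f, fun q hq => ?_⟩
  have := Submodule.starProjection_inner_eq_zero (K := W) f q hq
  exact this

theorem ip_diff_deg {F G : MvPolynomial σ ℂ} {d e : ℕ} (hF : F.IsHomogeneous d)
    (hG : G.IsHomogeneous e) (h : d ≠ e) : ip F G = 0 := by
  unfold ip
  refine Finset.sum_eq_zero fun M hM => ?_
  by_cases h2 : coeff M G = 0
  · rw [h2, mul_zero]
  · exfalso
    have h1 := hF (mem_support_iff.mp hM)
    have h3 := hG h2
    exact h (h1.symm.trans h3)

theorem ip_homComp {F : MvPolynomial σ ℂ} {d : ℕ} (hF : F.IsHomogeneous d)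
    (G : MvPolynomial σ ℂ) : ip F G = ip F (homogeneousComponent d G) := by
  conv_lhs => rw [← sum_homogeneousComponent G]
  rw [ip_sum_right]
  by_cases hd : d ∈ Finset.range (G.totalDegree + 1)
  · rw [Finset.sum_eq_single_of_mem d hd]
    intro e _ he
    exact ip_diff_deg hF (homogeneousComponent_isHomogeneous e G) he.symm
  · rw [homogeneousComponent_eq_zero d G (by simpa using hd), ip_zero_right]
    refine Finset.sum_eq_zero fun e he => ?_
    exact ip_diff_deg hF (homogeneousComponent_isHomogeneous e G) (by rintro rfl; exact hd he)

end ip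
end SqZ



set_option linter.unusedSectionVars false
set_option linter.style.haveILetI false

namespace SqZ
open MvPolynomial

/-- The polynomial ring in the entries of a generic matrix. -/
abbrev Pn (n : ℕ) := MvPolynomial (Fin n × Fin n) ℂ

section ops
variable {n : ℕ}

/-- Generic matrix. -/
def gX (n : ℕ) : Matrix (Fin n) (Fin n) (Pn n) := Matrix.of fun i j => X (i, j)

theorem gX_apply (i j : Fin n) : gX n i j = X (i, j) := rfl

/-- The ideal generated by the trace and the entries of the square of the generic matrix. -/
def I0 (n : ℕ) : Ideal (Pn n) :=
  Ideal.span ({(gX n).trace} ∪ Set.range fun p : Fin n × Fin n => (gX n * gX n) p.1 p.2)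

theorem tr_mem_I0 : (gX n).trace ∈ I0 n := Ideal.subset_span (Or.inl rfl)

theorem sq_mem_I0 (i j : Fin n) : (gX n * gX n) i j ∈ I0 n :=
  Ideal.subset_span (Or.inr ⟨(i, j), rfl⟩)

/-- Left polarization operators. -/
def Lop (a b : Fin n) : Derivation ℂ (Pn n) (Pn n) :=
  ∑ k, (X (a, k) : Pn n) • pderiv (b, k)

/-- Right polarization operators. -/
def Rop (a b : Fin n) : Derivation ℂ (Pn n) (Pn n) :=
  ∑ k, (X (k, a) : Pn n) • pderiv (k, b)

theorem Lop_apply (a b : Fin n) (F : Pn n) :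
    Lop a b F = ∑ k, X (a, k) * pderiv (b, k) F := by
  unfold Lop
  have := congrFun (map_sum (Derivation.coeFnAddMonoidHom (R := ℂ) (A := Pn n) (M := Pn n))
    (fun k => (X (a, k) : Pn n) • pderiv (b, k)) Finset.univ) F
  simp only [Derivation.coeFnAddMonoidHom_apply] at this
  rw [this]
  simp

theorem Rop_apply (a b : Fin n) (F : Pn n) :
    Rop a b F = ∑ k, X (k, a) * pderiv (k, b) F := by
  unfold Rop
  have := congrFun (map_sum (Derivation.coeFnAddMonoidHom (R := ℂ) (A := Pn n) (M := Pn n))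
    (fun k => (X (k, a) : Pn n) • pderiv (k, b)) Finset.univ) F
  simp only [Derivation.coeFnAddMonoidHom_apply] at this
  rw [this]
  simp

theorem Lop_X (a b i j : Fin n) : Lop a b (X (i, j)) = if i = b then X (a, j) else 0 := by
  rw [Lop_apply]
  simp only [pderiv_X, Pi.single_apply, Prod.mk.injEq]
  by_cases h : i = b
  · subst h; simp
  · simp [h]

theorem Rop_X (a b i j : Fin n) : Rop a b (X (i, j)) = if j = b then X (i, a) else 0 := by
  rw [Rop_apply]
  simp only [pderiv_X, Pi.single_apply, Prod.mk.injEq]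
  by_cases h : j = b
  · subst h; simp
  · simp [h]

theorem LR_comm (a b c d : Fin n) (F : Pn n) :
    Lop a b (Rop c d F) = Rop c d (Lop a b F) := by
  have : ⁅Lop (n := n) a b, Rop (n := n) c d⁆ = 0 := by
    apply MvPolynomial.derivation_ext
    rintro ⟨i, j⟩
    rw [Derivation.commutator_apply, Rop_X, Lop_X]
    by_cases h1 : j = d <;> by_cases h2 : i = b <;> simp [h1, h2, Lop_X, Rop_X]
  have h2 := congrArg (fun D : Derivation ℂ (Pn n) (Pn n) => D F) this
  simp only [Derivation.commutator_apply, Derivation.zero_apply] at h2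
  exact sub_eq_zero.mp h2

theorem ip_Lop (a b : Fin n) (F G : Pn n) : ip (Lop a b F) G = ip F (Lop b a G) := by
  rw [Lop_apply, Lop_apply, ip_sum_left, ip_sum_right]
  exact Finset.sum_congr rfl fun k _ => by rw [ip_X_mul, ip_mul_X]

theorem ip_Rop (a b : Fin n) (F G : Pn n) : ip (Rop a b F) G = ip F (Rop b a G) := by
  rw [Rop_apply, Rop_apply, ip_sum_left, ip_sum_right]
  exact Finset.sum_congr rfl fun k _ => by rw [ip_X_mul, ip_mul_X]

/-- The adjoint action. -/
def adj (a b : Fin n) : Derivation ℂ (Pn n) (Pn n) := Lop a b - Rop b a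

theorem adj_apply (a b : Fin n) (F : Pn n) : adj a b F = Lop a b F - Rop b a F := rfl

theorem ip_adj (a b : Fin n) (F G : Pn n) : ip (adj a b F) G = ip F (adj b a G) := by
  rw [adj_apply, adj_apply, ip_sub_left, ip_sub_right, ip_Lop, ip_Rop]

theorem adj_X (a b i j : Fin n) :
    adj a b (X (i, j)) = (if i = b then X (a, j) else 0) - (if j = a then X (i, b) else 0) := by
  rw [adj_apply, Lop_X, Rop_X]

theorem adj_tr (a b : Fin n) : adj a b (gX n).trace = 0 := by
  rw [Matrix.trace, map_sum]
  simp only [Matrix.diag_apply, gX_apply, adj_X, Finset.sum_sub_distrib]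
  simp

theorem adj_sq (a b i j : Fin n) :
    adj a b ((gX n * gX n) i j) = (if i = b then (gX n * gX n) a j else 0) -
      (if j = a then (gX n * gX n) i b else 0) := by
  rw [Matrix.mul_apply, map_sum]
  simp only [Derivation.leibniz, gX_apply, adj_X, smul_eq_mul, mul_sub, Finset.sum_add_distrib,
    Finset.sum_sub_distrib]
  simp only [Matrix.mul_apply, gX_apply]
  by_cases h1 : i = b <;> by_cases h2 : j = a <;>
    simp [h1, h2, mul_comm] <;> ring

theorem derivation_span_le (D : Derivation ℂ (Pn n) (Pn n)) (s : Set (Pn n))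
    (h : ∀ x ∈ s, D x ∈ Ideal.span s) (p : Pn n) (hp : p ∈ Ideal.span s) :
    D p ∈ Ideal.span s := by
  induction hp using Submodule.span_induction with
  | mem x hx => exact h x hx
  | zero => simp
  | add x y _ _ hx hy => rw [map_add]; exact add_mem hx hy
  | smul a x hx' hx =>
    rw [smul_eq_mul, Derivation.leibniz]
    exact add_mem (Ideal.mul_mem_left _ _ hx) (by
      rw [smul_eq_mul]; exact Ideal.mul_mem_right _ _ hx')

theorem adj_mem_I0 (a b : Fin n) (p : Pn n) (hp : p ∈ I0 n) : adj a b p ∈ I0 n := by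
  refine derivation_span_le (adj a b) _ ?_ p hp
  rintro x (hx | ⟨⟨i, j⟩, rfl⟩)
  · rw [Set.mem_singleton_iff.mp hx, adj_tr]; exact zero_mem _
  · simp only [adj_sq]
    refine sub_mem ?_ ?_ <;> split_ifs
    · exact sq_mem_I0 _ _
    · exact zero_mem _
    · exact sq_mem_I0 _ _
    · exact zero_mem _

theorem sum_LR_mem (F : Pn n) : ∑ a, ∑ b, Lop a b (Rop a b F) ∈ I0 n := by
  have key : ∑ a, ∑ b, Lop a b (Rop a b F) =
      (∑ k, ∑ l, (gX n * gX n) l k * ∑ b, pderiv (b, k) (pderiv (l, b) F)) +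
      (gX n).trace * ∑ b, pderiv (b, b) F := by
    have h1 : ∀ a b, Lop a b (Rop a b F) =
        (∑ k, ∑ l, X (l, a) * X (a, k) * pderiv (b, k) (pderiv (l, b) F)) +
        X (a, a) * pderiv (b, b) F := by
      intro a b
      rw [Rop_apply, map_sum]
      simp only [Derivation.leibniz, Lop_X, smul_eq_mul, Finset.sum_add_distrib]
      congr 1
      · rw [Finset.sum_comm]
        refine Finset.sum_congr rfl fun l _ => ?_
        rw [Lop_apply, Finset.mul_sum]
        exact Finset.sum_congr rfl fun k _ => by ring
      · simp [mul_comm]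
    simp only [h1, Finset.sum_add_distrib]
    congr 1
    · simp only [Matrix.mul_apply, gX_apply, Finset.sum_mul_sum]
      rw [Finset.sum_comm' (t' := Finset.univ) (s' := fun _ => Finset.univ) (by simp)]
      calc _ = ∑ b, ∑ k, ∑ l, ∑ a, X (l, a) * X (a, k) * pderiv (b, k) (pderiv (l, b) F) := by
            refine Finset.sum_congr rfl fun b _ => ?_
            rw [Finset.sum_comm]
            refine Finset.sum_congr rfl fun k _ => ?_
            rw [Finset.sum_comm]
        _ = _ := by
            rw [Finset.sum_comm]
            refine Finset.sum_congr rfl fun k _ => ?_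
            rw [Finset.sum_comm]
            refine Finset.sum_congr rfl fun l _ => ?_
            rw [Finset.sum_comm]
    · simp only [Matrix.trace, Matrix.diag_apply, gX_apply, Finset.sum_mul_sum]
  rw [key]
  refine add_mem (sum_mem fun k _ => sum_mem fun l _ => ?_) ?_
  · exact Ideal.mul_mem_right _ _ (sq_mem_I0 _ _)
  · exact Ideal.mul_mem_right _ _ tr_mem_I0

theorem coeff_X_mul_pderiv (i : Fin n × Fin n) (F : Pn n) (M : Fin n × Fin n →₀ ℕ) :
    coeff M (X i * pderiv i F) = M i * coeff M F := by
  rw [coeff_X_mul']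
  split_ifs with h
  · have h1 : Finsupp.single i 1 ≤ M := by
      rw [Finsupp.single_le_iff]
      exact Nat.one_le_iff_ne_zero.mpr (Finsupp.mem_support_iff.mp h)
    rw [coeff_pderiv, tsub_add_cancel_of_le h1]
    have h2 : 1 ≤ M i := Nat.one_le_iff_ne_zero.mpr (Finsupp.mem_support_iff.mp h)
    simp [Nat.cast_sub h2]
    ring
  · simp [Finsupp.notMem_support_iff.mp h]

theorem coeff_Lop_diag (a : Fin n) (F : Pn n) (M : Fin n × Fin n →₀ ℕ) :
    coeff M (Lop a a F) = ((∑ k, M (a, k) : ℕ) : ℂ) * coeff M F := by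
  rw [Lop_apply, coeff_sum]
  simp only [coeff_X_mul_pderiv]
  rw [← Finset.sum_mul]
  push_cast
  rfl

theorem coeff_Rop_diag (a : Fin n) (F : Pn n) (M : Fin n × Fin n →₀ ℕ) :
    coeff M (Rop a a F) = ((∑ k, M (k, a) : ℕ) : ℂ) * coeff M F := by
  rw [Rop_apply, coeff_sum]
  simp only [coeff_X_mul_pderiv]
  rw [← Finset.sum_mul]
  push_cast
  rfl

theorem ip_diag (a : Fin n) (F : Pn n) :
    ip (Lop a a F) (Rop a a F) = ((∑ M ∈ F.support, mfacR M *
      (((∑ k, M (a, k) : ℕ) : ℝ) * ((∑ k, M (k, a) : ℕ) : ℝ)) * ‖coeff M F‖ ^ 2 : ℝ) : ℂ) := by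
  rw [ip_eq_sum _ _ F.support]
  · rw [Complex.ofReal_sum]
    refine Finset.sum_congr rfl fun M _ => ?_
    rw [coeff_Lop_diag, coeff_Rop_diag, mfac_eq, star_mul', star_natCast]
    have : star (coeff M F) * coeff M F = ((‖coeff M F‖ ^ 2 : ℝ) : ℂ) := by
      rw [Complex.ofReal_pow]; exact RCLike.conj_mul (coeff M F)
    rw [Complex.ofReal_mul, ← this]
    push_cast
    ring
  · intro M hM
    rw [mem_support_iff, coeff_Lop_diag] at hM
    exact mem_support_iff.mpr (right_ne_zero_of_mul hM)

/-- The key positivity argument. -/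
theorem hw_key (F : Pn n) (hI : ∀ p ∈ I0 n, ip F p = 0)
    (hw : ∀ a b : Fin n, a < b → Lop a b F = Rop b a F) (M : Fin n × Fin n →₀ ℕ)
    (hM : coeff M F ≠ 0) (a : Fin n) : (∑ k, M (a, k)) * (∑ k, M (k, a)) = 0 := by
  have h0 := hI _ (sum_LR_mem F)
  rw [ip_sum_right] at h0
  simp only [ip_sum_right] at h0
  have hpos : ∀ a b : Fin n, 0 ≤ (ip F (Lop a b (Rop a b F))).re := by
    intro a b
    rcases lt_trichotomy a b with h | h | h
    · rw [LR_comm, ← ip_Rop, ← hw a b h]; exact ip_self_nonneg _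
    · subst h
      rw [← ip_Lop, ip_diag, Complex.ofReal_re]
      exact Finset.sum_nonneg fun M _ => mul_nonneg (mul_nonneg (mfacR_pos M).le (by positivity))
        (sq_nonneg _)
    · rw [← ip_Lop, hw b a h]; exact ip_self_nonneg _
  have h1 := congrArg Complex.re h0
  simp only [Complex.re_sum, Complex.zero_re] at h1
  rw [Finset.sum_eq_zero_iff_of_nonneg
    (fun a _ => Finset.sum_nonneg fun b _ => hpos a b)] at h1
  have h2 := h1 a (Finset.mem_univ _)
  rw [Finset.sum_eq_zero_iff_of_nonneg (fun b _ => hpos a b)] at h2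
  have h3 := h2 a (Finset.mem_univ _)
  rw [← ip_Lop, ip_diag, Complex.ofReal_re, Finset.sum_eq_zero_iff_of_nonneg
    (fun M _ => mul_nonneg (mul_nonneg (mfacR_pos M).le (by positivity)) (sq_nonneg _))] at h3
  have h4 := h3 M (mem_support_iff.mpr hM)
  have h5 : (((∑ k, M (a, k) : ℕ) : ℝ) * ((∑ k, M (k, a) : ℕ) : ℝ)) = 0 := by
    rcases mul_eq_zero.mp h4 with h | h
    · rcases mul_eq_zero.mp h with h | h
      · exact absurd h (mfacR_pos M).ne'
      · exact h
    · exfalso; apply hM; simpa using h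
  exact_mod_cast h5

end ops
end SqZ



set_option linter.unusedSectionVars false
set_option linter.style.haveILetI false

namespace SqZ
open MvPolynomial

section thm1
variable {n : ℕ}

/-- Evaluation of a polynomial at a matrix. -/
def evm (Y : Matrix (Fin n) (Fin n) ℂ) : Pn n →ₐ[ℂ] ℂ := aeval fun p => Y p.1 p.2

theorem evm_X (Y : Matrix (Fin n) (Fin n) ℂ) (p : Fin n × Fin n) : evm Y (X p) = Y p.1 p.2 := by
  simp [evm]

/-- The polynomial vanishes on square zero matrices. -/
def VanN (F : Pn n) : Prop := ∀ Y : Matrix (Fin n) (Fin n) ℂ, Y * Y = 0 → evm Y F = 0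

theorem deriv_curve (D : Derivation ℂ (Pn n) (Pn n)) (Y : Matrix (Fin n) (Fin n) ℂ)
    (φ : Pn n →ₐ[ℂ] Polynomial ℂ) (h0 : ∀ p, (φ (X p)).eval 0 = Y p.1 p.2)
    (h1 : ∀ p, (Polynomial.derivative (φ (X p))).eval 0 = evm Y (D (X p))) (F : Pn n) :
    evm Y (D F) = (Polynomial.derivative (φ F)).eval 0 := by
  have h00 : ∀ G, (φ G).eval 0 = evm Y G := by
    intro G
    have : (Polynomial.aeval (0 : ℂ)).comp φ = evm Y := by
      apply MvPolynomial.algHom_ext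
      intro p
      rw [evm_X, ← h0 p]
      simp
    rw [← this]
    simp
  induction F using MvPolynomial.induction_on with
  | C a =>
    have : φ (C a) = Polynomial.C a := φ.commutes a
    rw [this]
    have h2 : D (C a) = 0 := D.map_algebraMap a
    simp [h2]
  | add p q hp hq => simp [hp, hq]
  | mul_X p i hp =>
    rw [Derivation.leibniz, map_add, smul_eq_mul, smul_eq_mul, map_mul, map_mul, map_mul, hp,
      Polynomial.derivative_mul, Polynomial.eval_add, Polynomial.eval_mul, Polynomial.eval_mul,
      h00, h00, h1]
    ring

theorem VanN_adj (a b : Fin n) (hab : a ≠ b) (F : Pn n) (hF : VanN F) : VanN (adj a b F) := by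
  intro Y hY
  set E : Matrix (Fin n) (Fin n) ℂ := Matrix.single b a 1 with hE
  have hEE : E * E = 0 := by rw [hE, Matrix.single_mul_single_of_ne _ _ _ _ hab]
  let φ : Pn n →ₐ[ℂ] Polynomial ℂ := aeval fun p =>
    Polynomial.C (Y p.1 p.2) + Polynomial.X * Polynomial.C ((E * Y - Y * E) p.1 p.2)
      - Polynomial.X ^ 2 * Polynomial.C ((E * Y * E) p.1 p.2)
  have hφ : φ F = 0 := by
    apply Polynomial.funext
    intro s
    have hc : (Polynomial.aeval s).comp φ =
        evm ((1 + s • E) * Y * (1 - s • E)) := by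
      apply MvPolynomial.algHom_ext
      intro p
      rw [evm_X]
      have : (1 + s • E) * Y * (1 - s • E) = Y + s • (E * Y - Y * E) - s ^ 2 • (E * Y * E) := by
        simp only [add_mul, mul_sub, one_mul, mul_one, smul_mul_assoc, mul_smul_comm, smul_add,
          smul_sub, smul_smul, pow_two]
        abel
      rw [this]
      simp [φ]
      ring
    have h1 : (1 - s • E) * (1 + s • E) = 1 := by
      simp only [sub_mul, mul_add, one_mul, mul_one, smul_mul_assoc, mul_smul_comm, hEE]
      simp
    have h2 : ((1 + s • E) * Y * (1 - s • E)) * ((1 + s • E) * Y * (1 - s • E)) = 0 := by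
      calc _ = (1 + s • E) * Y * ((1 - s • E) * (1 + s • E)) * Y * (1 - s • E) := by
            simp only [mul_assoc]
        _ = (1 + s • E) * (Y * Y) * (1 - s • E) := by rw [h1]; simp only [mul_assoc, one_mul]
        _ = 0 := by rw [hY]; simp
    have h3 := hF _ h2
    rw [← hc] at h3
    simpa [Polynomial.aeval_def, Polynomial.eval₂_eq_eval_map] using h3
  rw [deriv_curve (adj a b) Y φ _ _ F, hφ]
  · simp
  · intro p
    simp [φ]
  · rintro ⟨i, j⟩
    have h1 : evm Y (adj a b (X (i, j))) = (E * Y - Y * E) i j := by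
      rw [adj_X, map_sub, Matrix.sub_apply, hE]
      congr 1
      · by_cases h : i = b
        · subst h; simp [evm_X]
        · simp [h, Matrix.single_mul_apply_of_ne]
      · by_cases h : j = a
        · subst h; simp [evm_X]
        · simp [h, Matrix.mul_single_apply_of_ne]
    rw [h1]
    simp [φ]

/-- Weight of an index pair. -/
def wt1 (p : Fin n × Fin n) : ℕ := (n - (p.1 : ℕ)) + (p.2 : ℕ)

/-- Weight of a multi-index. -/
def wt (M : Fin n × Fin n →₀ ℕ) : ℕ := ∑ p, M p * wt1 p

theorem wt_add (M N : Fin n × Fin n →₀ ℕ) : wt (M + N) = wt M + wt N := by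
  simp [wt, add_mul, Finset.sum_add_distrib]

theorem wt_single (p : Fin n × Fin n) : wt (Finsupp.single p 1) = wt1 p := by
  unfold wt
  rw [Finset.sum_eq_single p]
  · simp
  · intro q _ hq; simp [Finsupp.single_eq_of_ne hq]
  · simp

theorem wt_le (M : Fin n × Fin n →₀ ℕ) : wt M ≤ M.degree * (2 * n) := by
  rw [Finsupp.degree_eq_sum, Finset.sum_mul]
  refine Finset.sum_le_sum fun p _ => Nat.mul_le_mul_left _ ?_
  have := p.2.2
  unfold wt1
  omega

theorem coeff_raise (p q : Fin n × Fin n) (hpq : wt1 q < wt1 p) (F : Pn n) (k : ℕ)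
    (hF : ∀ M, wt M < k → coeff M F = 0) (M : Fin n × Fin n →₀ ℕ) (hM : wt M < k + 1) :
    coeff M (X p * pderiv q F) = 0 := by
  rw [coeff_X_mul']
  split_ifs with h
  · have h1 : Finsupp.single p 1 ≤ M := by
      rw [Finsupp.single_le_iff]
      exact Nat.one_le_iff_ne_zero.mpr (Finsupp.mem_support_iff.mp h)
    rw [coeff_pderiv, hF, zero_mul]
    have h2 : wt (M - Finsupp.single p 1) + wt1 p = wt M := by
      rw [← wt_single, ← wt_add, tsub_add_cancel_of_le h1]
    rw [wt_add, wt_single]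
    omega
  · rfl

theorem adj_raise (a b : Fin n) (hab : a < b) (F : Pn n) (k : ℕ)
    (hF : ∀ M, wt M < k → coeff M F = 0) (M : Fin n × Fin n →₀ ℕ) (hM : wt M < k + 1) :
    coeff M (adj a b F) = 0 := by
  rw [adj_apply, coeff_sub, Lop_apply, Rop_apply, coeff_sum, coeff_sum,
    Finset.sum_eq_zero, Finset.sum_eq_zero, sub_zero]
  · intro i _
    refine coeff_raise _ _ ?_ F k hF M hM
    have : (a : ℕ) < b := hab
    simp only [wt1]; omega
  · intro i _
    refine coeff_raise _ _ ?_ F k hF M hM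
    have : (a : ℕ) < b := hab
    have := b.2
    simp only [wt1]; omega

theorem hom_X_pderiv (p q : Fin n × Fin n) (F : Pn n) (d : ℕ) (hF : F.IsHomogeneous d) :
    (X p * pderiv q F).IsHomogeneous d := by
  rcases Nat.eq_zero_or_pos d with h | h
  · subst h
    obtain ⟨c, hc⟩ : ∃ c, F = C c := ⟨_, totalDegree_eq_zero_iff_eq_C.mp (by
      simpa using hF.totalDegree_le)⟩
    rw [hc, pderiv_C, mul_zero]
    exact isHomogeneous_zero _ _ _
  · have := (isHomogeneous_X ℂ p).mul (hF.pderiv (i := q))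
    rwa [show 1 + (d - 1) = d by omega] at this

theorem adj_hom (a b : Fin n) (F : Pn n) (d : ℕ) (hF : F.IsHomogeneous d) :
    (adj a b F).IsHomogeneous d := by
  rw [adj_apply, Lop_apply, Rop_apply]
  exact (IsHomogeneous.sum _ _ _ fun k _ => hom_X_pderiv _ _ F d hF).sub
    (IsHomogeneous.sum _ _ _ fun k _ => hom_X_pderiv _ _ F d hF)

/-- A polynomial orthogonal to the ideal, vanishing on square zero matrices, is zero. -/
theorem harm_zero (d : ℕ) (F : Pn n) (hd : F.IsHomogeneous d) (hV : VanN F)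
    (hI : ∀ p ∈ I0 n, ip F p = 0) : F = 0 := by
  by_contra hF0
  let Q : ℕ → Prop := fun k => ∃ F : Pn n, F ≠ 0 ∧ F.IsHomogeneous d ∧ VanN F ∧
    (∀ p ∈ I0 n, ip F p = 0) ∧ ∀ M, wt M < k → coeff M F = 0
  have hQ0 : Q 0 := ⟨F, hF0, hd, hV, hI, fun M hM => absurd hM (Nat.not_lt_zero _)⟩
  have hQb : ¬ Q (d * (2 * n) + 1) := by
    rintro ⟨G, hG0, hGd, -, -, hG⟩
    apply hG0
    ext M
    by_contra hM
    have h1 : M.degree = d := by rw [Finsupp.degree_eq_weight_one]; exact hGd hM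
    exact hM (hG M (by have := wt_le M; rw [h1] at this; omega))
  obtain ⟨k, hk, hk1⟩ : ∃ k, Q k ∧ ¬ Q (k + 1) := by
    by_contra! hcon
    have : ∀ k, Q k := fun k => by
      induction k with
      | zero => exact hQ0
      | succ k ih => exact hcon k ih
    exact hQb (this _)
  obtain ⟨G, hG0, hGd, hGV, hGI, hGk⟩ := hk
  have hw : ∀ a b : Fin n, a < b → Lop a b G = Rop b a G := by
    intro a b hab
    by_contra hne
    refine hk1 ⟨adj a b G, sub_ne_zero.mpr hne, adj_hom a b G d hGd, VanN_adj a b hab.ne G hGV,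
      fun p hp => ?_, adj_raise a b hab G k hGk⟩
    rw [ip_adj]
    exact hGI _ (adj_mem_I0 b a p hp)
  obtain ⟨M, hM⟩ := ne_zero_iff.mp hG0
  have hdis := hw_key G hGI hw M hM
  -- restriction to the block
  let S : Fin n → Prop := fun a => ∃ k, M (a, k) ≠ 0
  have hMS : ∀ i j, M (i, j) ≠ 0 → S i ∧ ¬ S j := by
    intro i j hij
    refine ⟨⟨j, hij⟩, ?_⟩
    rintro ⟨k, hk⟩
    rcases mul_eq_zero.mp (hdis j) with h | h
    · exact hk (Finset.sum_eq_zero_iff.mp h k (Finset.mem_univ _))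
    · exact hij (Finset.sum_eq_zero_iff.mp h i (Finset.mem_univ _))
  classical
  let ψ : Pn n →ₐ[ℂ] Pn n := aeval fun p => if S p.1 ∧ ¬ S p.2 then X p else 0
  have hψ : ψ G = 0 := by
    apply MvPolynomial.funext
    intro y
    let Y : Matrix (Fin n) (Fin n) ℂ := Matrix.of fun i j => if S i ∧ ¬ S j then y (i, j) else 0
    have hY : Y * Y = 0 := by
      ext i j
      rw [Matrix.mul_apply]
      refine Finset.sum_eq_zero fun k _ => ?_
      simp only [Y, Matrix.of_apply]
      by_cases h : S k <;> simp [h]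
    have h1 := hGV Y hY
    have h2 : (aeval y).comp ψ = evm Y := by
      apply MvPolynomial.algHom_ext
      intro p
      rw [evm_X]
      simp only [AlgHom.comp_apply, ψ, aeval_X, Y, Matrix.of_apply]
      split_ifs <;> simp
    rw [← h2] at h1
    simpa [aeval_eq_eval] using h1
  have hco : coeff M (ψ G) = coeff M G := by
    have hmon : ∀ (N : Fin n × Fin n →₀ ℕ) (c : ℂ),
        coeff M (ψ (monomial N c)) = coeff M (monomial N c) := by
      intro N c
      by_cases hN : ∀ i j, N (i, j) ≠ 0 → S i ∧ ¬ S j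
      · have : ψ (monomial N c) = monomial N c := by
          simp only [ψ, aeval_monomial]
          rw [monomial_eq]
          congr 1
          refine Finsupp.prod_congr ?_
          rintro ⟨i, j⟩ hp
          rw [if_pos (hN i j (Finsupp.mem_support_iff.mp hp))]
        rw [this]
      · push Not at hN
        obtain ⟨i, j, hij, hS⟩ := hN
        have h1 : ψ (monomial N c) = 0 := by
          simp only [ψ, aeval_monomial]
          rw [Finsupp.prod, Finset.prod_eq_zero (i := (i, j)) (Finsupp.mem_support_iff.mpr hij),
            mul_zero]
          rw [if_neg (by tauto), zero_pow hij]
        have h2 : N ≠ M := by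
          rintro rfl
          have := hMS i j hij
          tauto
        rw [h1, coeff_monomial, if_neg h2, coeff_zero]
    clear hM hψ hw hGk hGI hGV hGd hG0
    induction G using MvPolynomial.induction_on' with
    | monomial N c => exact hmon N c
    | add p q hp hq => rw [map_add, coeff_add, coeff_add, hp, hq]
  rw [hψ, coeff_zero] at hco
  exact hM hco.symm

attribute [local instance] MvPolynomial.gradedAlgebra

theorem gX_hom (i j : Fin n) : (gX n i j).IsHomogeneous 1 := isHomogeneous_X _ _

theorem tr_hom : ((gX n).trace).IsHomogeneous 1 :=
  IsHomogeneous.sum _ _ _ fun i _ => gX_hom i i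

theorem sq_hom (i j : Fin n) : ((gX n * gX n) i j).IsHomogeneous 2 :=
  IsHomogeneous.sum _ _ _ fun k _ => (gX_hom i k).mul (gX_hom k j)

theorem I0_hom : (I0 n).IsHomogeneous (homogeneousSubmodule (Fin n × Fin n) ℂ) := by
  apply Ideal.homogeneous_span
  rintro x (hx | ⟨⟨i, j⟩, rfl⟩)
  · rw [Set.mem_singleton_iff.mp hx]
    exact ⟨1, tr_hom⟩
  · exact ⟨2, sq_hom i j⟩

theorem VanN_I0 (p : Pn n) (hp : p ∈ I0 n) (Y : Matrix (Fin n) (Fin n) ℂ) (hY : Y * Y = 0)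
    (ht : Y.trace = 0) : evm Y p = 0 := by
  have h1 : I0 n ≤ RingHom.ker (evm Y) := by
    refine Ideal.span_le.mpr ?_
    rintro x (hx | ⟨⟨i, j⟩, rfl⟩)
    · rw [Set.mem_singleton_iff.mp hx]
      change evm Y _ = 0
      rw [← ht, Matrix.trace, map_sum, Matrix.trace]
      exact Finset.sum_congr rfl fun i _ => evm_X Y (i, i)
    · change evm Y _ = 0
      have : (Y * Y) i j = 0 := by rw [hY]; rfl
      simp only
      rw [← this, Matrix.mul_apply, Matrix.mul_apply, map_sum]
      refine Finset.sum_congr rfl fun k _ => ?_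
      rw [map_mul, gX_apply, gX_apply, evm_X, evm_X]
  exact h1 hp

/-- Weyman's theorem for square zero matrices. -/
theorem mem_I0 (d : ℕ) (f : Pn n) (hd : f.IsHomogeneous d) (hV : VanN f) : f ∈ I0 n := by
  let W : Submodule ℂ (Pn n) := (I0 n).restrictScalars ℂ ⊓ homogeneousSubmodule _ ℂ d
  have hfin : FiniteDimensional ℂ (homogeneousSubmodule (Fin n × Fin n) ℂ d) :=
    Module.Finite.iff_fg.mpr (homogeneousSubmodule_fg _ _ d)
  haveI : FiniteDimensional ℂ W := Submodule.finiteDimensional_of_le inf_le_right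
  obtain ⟨p, hp, hpq⟩ := exists_proj W f
  have hpI : p ∈ I0 n := hp.1
  have hph : p.IsHomogeneous d := hp.2
  have : f - p = 0 := by
    apply harm_zero d _ (hd.sub hph)
    · intro Y hY
      have ht : Y.trace = 0 := by
        have h1 : IsNilpotent Y := ⟨2, by rw [pow_two, hY]⟩
        exact (Matrix.isNilpotent_trace_of_isNilpotent h1).eq_zero
      rw [map_sub, hV Y hY, VanN_I0 p hpI Y hY ht, sub_zero]
    · intro q hq
      rw [ip_homComp (hd.sub hph)]
      exact hpq _ ⟨(mem_iff_homogeneousComponent_mem I0_hom q).mp hq d,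
        homogeneousComponent_isHomogeneous d q⟩
  rw [sub_eq_zero.mp this]
  exact hpI

end thm1
end SqZ



set_option linter.unusedSectionVars false
set_option linter.style.haveILetI false

namespace SqZ
open MvPolynomial

section cone

theorem exists_between {V : Type} [AddCommGroup V] [Module ℂ V] [FiniteDimensional ℂ V]
    (A B : Submodule ℂ V) (hAB : A ≤ B) (k : ℕ) (hA : Module.finrank ℂ A ≤ k) :
    k ≤ Module.finrank ℂ B → ∃ U : Submodule ℂ V, A ≤ U ∧ U ≤ B ∧ Module.finrank ℂ U = k := by
  induction k, hA using Nat.le_induction with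
  | base => exact fun _ => ⟨A, le_rfl, hAB, rfl⟩
  | succ k hk ih =>
    intro hB
    obtain ⟨U, hAU, hUB, hU⟩ := ih (by omega)
    have hne : ¬ B ≤ U := by
      intro h
      have := Submodule.finrank_mono h
      omega
    obtain ⟨v, hvB, hvU⟩ := SetLike.not_le_iff_exists.mp hne
    refine ⟨U ⊔ Submodule.span ℂ {v}, hAU.trans le_sup_left, sup_le hUB ?_, ?_⟩
    · rw [Submodule.span_le]; simpa using hvB
    · apply le_antisymm
      · have h1 := Submodule.finrank_add_le_finrank_add_finrank U (Submodule.span ℂ {v})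
        have h2 := finrank_span_le_card (R := ℂ) ({v} : Set V)
        simp at h2
        omega
      · have : U < U ⊔ Submodule.span ℂ {v} := by
          refine lt_of_le_of_ne le_sup_left fun h => hvU ?_
          rw [h]
          exact (le_sup_right : Submodule.span ℂ {v} ≤ _) (Submodule.mem_span_singleton_self v)
        have := Submodule.finrank_lt_finrank_of_lt this
        omega

variable {m : ℕ}

theorem exists_basis (Y : Matrix (Fin (2 * m)) (Fin (2 * m)) ℂ) (hY : Y * Y = 0) :
    ∃ b : Module.Basis (Fin (2 * m)) ℂ (Fin (2 * m) → ℂ),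
      (∀ i : Fin (2 * m), (i : ℕ) < m → Y *ᵥ (b i) = 0) ∧
      ∀ v (i : Fin (2 * m)), ¬ (i : ℕ) < m → b.repr (Y *ᵥ v) i = 0 := by
  set f := Y.mulVecLin with hf
  have hle : LinearMap.range f ≤ LinearMap.ker f := by
    rintro _ ⟨v, rfl⟩
    simp [hf, Matrix.mulVec_mulVec, hY]
  have hrk := LinearMap.finrank_range_add_finrank_ker f
  have hmono := Submodule.finrank_mono hle
  rw [Module.finrank_fin_fun] at hrk
  obtain ⟨U, h1, h2, h3⟩ := exists_between _ _ hle m (by omega) (by omega)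
  obtain ⟨W, hW⟩ := Submodule.exists_isCompl U
  have hWd : Module.finrank ℂ W = m := by
    have := Submodule.finrank_add_eq_of_isCompl hW
    rw [Module.finrank_fin_fun] at this
    omega
  let bU : Module.Basis (Fin m) ℂ U := Module.finBasisOfFinrankEq ℂ U h3
  let bW : Module.Basis (Fin m) ℂ W := Module.finBasisOfFinrankEq ℂ W hWd
  let e : Fin m ⊕ Fin m ≃ Fin (2 * m) := finSumFinEquiv.trans (finCongr (two_mul m).symm)
  let b0 := (bU.prod bW).map (Submodule.prodEquivOfIsCompl U W hW)
  refine ⟨b0.reindex e, ?_, ?_⟩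
  · intro i hi
    have he : e (Sum.inl ⟨i, hi⟩) = i := by
      apply Fin.ext; simp [e]
    rw [← he, Module.Basis.reindex_apply, Equiv.symm_apply_apply]
    have : b0 (Sum.inl ⟨i, hi⟩) = (bU ⟨i, hi⟩ : Fin (2 * m) → ℂ) := by
      simp [b0]
    rw [this]
    exact h2 (bU ⟨i, hi⟩).2
  · intro v i hi
    have hi2 : (i : ℕ) - m < m := by have := i.2; omega
    have he : e (Sum.inr ⟨i - m, hi2⟩) = i := by
      apply Fin.ext; simp [e]; omega
    rw [← he, Module.Basis.repr_reindex_apply, Equiv.symm_apply_apply]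
    have hv : Y *ᵥ v ∈ U := h1 ⟨v, rfl⟩
    have : (Submodule.prodEquivOfIsCompl U W hW).symm (Y *ᵥ v) = (⟨Y *ᵥ v, hv⟩, 0) := by
      rw [LinearEquiv.symm_apply_eq]
      simp
    simp only [b0, Module.Basis.map_repr, LinearEquiv.trans_apply, this,
      Module.Basis.prod_repr_inr]
    simp

/-- The diagonal matrix with `m` ones and `m` minus-ones. -/
def Dm (m : ℕ) : Matrix (Fin (2 * m)) (Fin (2 * m)) ℂ :=
  Matrix.diagonal fun i : Fin (2 * m) => if (i : ℕ) < m then (1 : ℂ) else -1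

theorem Dm_sq : Dm m * Dm m = 1 := by
  unfold Dm
  rw [Matrix.diagonal_mul_diagonal, ← Matrix.diagonal_one]
  congr 1
  funext i
  split_ifs <;> simp

theorem Dm_tr : (Dm m).trace = 0 := by
  unfold Dm
  rw [Matrix.trace_diagonal]
  let e : Fin m ⊕ Fin m ≃ Fin (2 * m) := finSumFinEquiv.trans (finCongr (two_mul m).symm)
  rw [← e.sum_comp, Fintype.sum_sum_type]
  simp [e]

/-- The polynomial vanishes on the cone. -/
def VanC (f : Pn (2 * m)) : Prop := ∀ t : ℂ, t ≠ 0 →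
  ∀ g : Matrix.GeneralLinearGroup (Fin (2 * m)) ℂ,
    evm (t • ((↑g : Matrix (Fin (2 * m)) (Fin (2 * m)) ℂ) * Dm m *
      (↑g⁻¹ : Matrix (Fin (2 * m)) (Fin (2 * m)) ℂ))) f = 0

theorem exists_conj (Y : Matrix (Fin (2 * m)) (Fin (2 * m)) ℂ) (hY : Y * Y = 0) :
    ∃ g h : Matrix (Fin (2 * m)) (Fin (2 * m)) ℂ, g * h = 1 ∧ h * g = 1 ∧
      (g * Dm m * h) * Y = Y ∧ Y * (g * Dm m * h) = - Y := by
  obtain ⟨b, h1, h2⟩ := exists_basis Y hY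
  let c := Pi.basisFun ℂ (Fin (2 * m))
  let g := c.toMatrix b
  let h := b.toMatrix c
  have hgh : g * h = 1 := Module.Basis.toMatrix_mul_toMatrix_flip c b
  have hhg : h * g = 1 := Module.Basis.toMatrix_mul_toMatrix_flip b c
  have hZ : h * Y * g = LinearMap.toMatrix b b (Matrix.toLin' Y) := by
    have := basis_toMatrix_mul_linearMap_toMatrix_mul_basis_toMatrix b c b c (Matrix.toLin' Y)
    rw [← this, LinearMap.toMatrix_eq_toMatrix', LinearMap.toMatrix'_toLin']
  set Z := h * Y * g with hZdef
  have hZ1 : ∀ i j : Fin (2 * m), (j : ℕ) < m → Z i j = 0 := by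
    intro i j hj
    rw [hZ, LinearMap.toMatrix_apply, Matrix.toLin'_apply, h1 j hj]
    simp
  have hZ2 : ∀ i j : Fin (2 * m), ¬ (i : ℕ) < m → Z i j = 0 := by
    intro i j hi
    rw [hZ, LinearMap.toMatrix_apply, Matrix.toLin'_apply, h2 _ i hi]
  have hDZ : Dm m * Z = Z := by
    ext i j
    rw [Dm, Matrix.diagonal_mul]
    split_ifs with hi
    · simp
    · simp [hZ2 i j hi]
  have hZD : Z * Dm m = - Z := by
    ext i j
    rw [Dm, Matrix.mul_diagonal]
    split_ifs with hi
    · simp [hZ1 i j hi]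
    · simp
  have hYZ : Y = g * Z * h := by
    calc Y = (g * h) * Y * (g * h) := by rw [hgh]; simp
      _ = g * Z * h := by rw [hZdef]; simp only [mul_assoc]
  refine ⟨g, h, hgh, hhg, ?_, ?_⟩
  · calc g * Dm m * h * Y = g * Dm m * (h * g) * Z * h := by
          conv_lhs => rw [hYZ]
          simp only [mul_assoc]
      _ = g * (Dm m * Z) * h := by rw [hhg]; simp only [mul_assoc, one_mul]
      _ = Y := by rw [hDZ, ← hYZ]
  · calc Y * (g * Dm m * h) = g * Z * (h * g) * Dm m * h := by
          conv_lhs => rw [hYZ]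
          simp only [mul_assoc]
      _ = g * (Z * Dm m) * h := by rw [hhg]; simp only [mul_assoc, one_mul]
      _ = - Y := by rw [hZD, hYZ]; simp

theorem VanC.vanN (f : Pn (2 * m)) (hf : VanC f) : VanN f := by
  intro Y hY
  obtain ⟨g, h, hgh, hhg, h1, h2⟩ := exists_conj Y hY
  set E := g * Dm m * h with hE
  have hEeps : ∀ s : ℂ, s ≠ 0 → evm (Y + s • E) f = 0 := by
    intro s hs
    set r : ℂ := (2 * s)⁻¹ with hr
    have hYEY : Y * E * Y = 0 := by rw [mul_assoc, h1, hY]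
    let u : Matrix.GeneralLinearGroup (Fin (2 * m)) ℂ :=
      ⟨(1 - r • Y) * g, h * (1 + r • Y), by
        calc (1 - r • Y) * g * (h * (1 + r • Y)) = (1 - r • Y) * (g * h) * (1 + r • Y) := by
              simp only [mul_assoc]
          _ = 1 := by
              rw [hgh]
              simp only [sub_mul, mul_add, one_mul, mul_one, smul_mul_assoc, mul_smul_comm, hY]
              simp, by
        calc h * (1 + r • Y) * ((1 - r • Y) * g) = h * ((1 + r • Y) * (1 - r • Y)) * g := by
              simp only [mul_assoc]
          _ = 1 := by
              have : (1 + r • Y) * (1 - r • Y) = 1 := by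
                simp only [add_mul, mul_sub, one_mul, mul_one, smul_mul_assoc, mul_smul_comm, hY]
                simp
              rw [this, mul_one, hhg]⟩
    have h3 := hf s hs u
    have h4 : s • ((↑u : Matrix (Fin (2 * m)) (Fin (2 * m)) ℂ) * Dm m *
        (↑u⁻¹ : Matrix (Fin (2 * m)) (Fin (2 * m)) ℂ)) = Y + s • E := by
      change s • (((1 - r • Y) * g) * Dm m * (h * (1 + r • Y))) = _
      have h5 : ((1 - r • Y) * g) * Dm m * (h * (1 + r • Y)) =
          (1 - r • Y) * E * (1 + r • Y) := by rw [hE]; simp only [mul_assoc]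
      have h6 : (1 - r • Y) * E * (1 + r • Y) = E + (2 * r) • Y := by
        simp only [sub_mul, mul_add, one_mul, mul_one, smul_mul_assoc, mul_smul_comm, h1, h2,
          neg_mul, hY]
        simp only [smul_neg, neg_zero, smul_zero, two_mul, add_smul]
        abel
      rw [h5, h6, smul_add, smul_smul]
      have : s * (2 * r) = 1 := by rw [hr]; field_simp
      rw [this, one_smul, add_comm]
    rw [h4] at h3
    exact h3
  let φ : Pn (2 * m) →ₐ[ℂ] Polynomial ℂ := aeval fun p =>
    Polynomial.C (Y p.1 p.2) + Polynomial.X * Polynomial.C (E p.1 p.2)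
  have hφ : ∀ s : ℂ, (φ f).eval s = evm (Y + s • E) f := by
    intro s
    have : (Polynomial.aeval s).comp φ = evm (Y + s • E) := by
      apply MvPolynomial.algHom_ext
      intro p
      rw [evm_X]
      simp [φ]
      ring
    rw [← this]
    simp
  have h0 : φ f * Polynomial.X = 0 := by
    apply Polynomial.funext
    intro s
    rw [Polynomial.eval_mul, Polynomial.eval_X, hφ]
    by_cases hs : s = 0
    · simp [hs]
    · simp [hEeps s hs]
  have h00 : φ f = 0 := (mul_eq_zero.mp h0).resolve_right Polynomial.X_ne_zero
  have h3 := hφ 0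
  rw [h00] at h3
  simpa using h3.symm

theorem evm_smul {n : ℕ} (s : ℂ) (Y : Matrix (Fin n) (Fin n) ℂ) (f : Pn n) (d : ℕ)
    (hf : f.IsHomogeneous d) : evm (s • Y) f = s ^ d * evm Y f := by
  unfold evm
  rw [aeval_eq_eval, aeval_eq_eval]
  change eval _ f = s ^ d * eval _ f
  rw [eval_eq', eval_eq', Finset.mul_sum]
  refine Finset.sum_congr rfl fun M hM => ?_
  have h1 : M.degree = d := by
    rw [Finsupp.degree_eq_weight_one]; exact hf (mem_support_iff.mp hM)
  simp only [Matrix.smul_apply, smul_eq_mul, mul_pow, Finset.prod_mul_distrib]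
  rw [Finset.prod_pow_eq_pow_sum, ← Finsupp.degree_eq_sum, h1]
  ring

theorem VanC.comp (f : Pn (2 * m)) (hf : VanC f) (d : ℕ) : VanC (homogeneousComponent d f) := by
  intro t ht g
  set Y := t • ((↑g : Matrix (Fin (2 * m)) (Fin (2 * m)) ℂ) * Dm m *
      (↑g⁻¹ : Matrix (Fin (2 * m)) (Fin (2 * m)) ℂ)) with hY
  by_cases hd : d ∈ Finset.range (f.totalDegree + 1)
  swap
  · rw [homogeneousComponent_eq_zero d f (by simpa using hd), map_zero]
  let P : Polynomial ℂ := ∑ k ∈ Finset.range (f.totalDegree + 1),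
    Polynomial.monomial k (evm Y (homogeneousComponent k f))
  have h0 : P * Polynomial.X = 0 := by
    apply Polynomial.funext
    intro s
    rw [Polynomial.eval_mul, Polynomial.eval_X]
    by_cases hs : s = 0
    · simp [hs]
    have h1 : P.eval s = evm (s • Y) f := by
      conv_rhs => rw [← sum_homogeneousComponent f]
      rw [map_sum, Polynomial.eval_finset_sum]
      refine Finset.sum_congr rfl fun k _ => ?_
      rw [evm_smul s Y _ k (homogeneousComponent_isHomogeneous k f), Polynomial.eval_monomial,
        mul_comm]
    rw [h1, hY, smul_smul, hf (s * t) (mul_ne_zero hs ht) g]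
    simp
  have h00 : P = 0 := (mul_eq_zero.mp h0).resolve_right Polynomial.X_ne_zero
  have h2 := congrArg (fun p => Polynomial.coeff p d) h00
  simp only [P, Polynomial.finset_sum_coeff, Polynomial.coeff_monomial, Polynomial.coeff_zero] at h2
  rw [Finset.sum_ite_eq' , if_pos hd] at h2
  exact h2

/-- The parameter polynomial. -/
def tau (m : ℕ) : Pn (2 * m) := C ((2 * m : ℂ)⁻¹) * (gX (2 * m) * gX (2 * m)).trace

/-- The generators. -/
def gen (i j : Fin (2 * m)) : Pn (2 * m) :=
  (gX (2 * m) * gX (2 * m)) i j - tau m * (1 : Matrix (Fin (2 * m)) (Fin (2 * m)) (Pn (2 * m))) i j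

/-- The ideal of the cone. -/
def It (m : ℕ) : Ideal (Pn (2 * m)) :=
  Ideal.span ({(gX (2 * m)).trace} ∪ Set.range fun p : Fin (2 * m) × Fin (2 * m) => gen p.1 p.2)

theorem tau_hom : (tau m).IsHomogeneous 2 := by
  have := (isHomogeneous_C (Fin (2 * m) × Fin (2 * m)) ((2 * m : ℂ)⁻¹)).mul
    (IsHomogeneous.sum Finset.univ (fun i => (gX (2 * m) * gX (2 * m)) i i) 2
      (fun i _ => sq_hom i i))
  rwa [zero_add] at this

theorem gen_hom (i j : Fin (2 * m)) : (gen i j).IsHomogeneous 2 := by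
  unfold gen
  refine (sq_hom i j).sub ?_
  rw [Matrix.one_apply]
  split_ifs
  · rw [mul_one]; exact tau_hom
  · rw [mul_zero]; exact isHomogeneous_zero _ _ _

attribute [local instance] MvPolynomial.gradedAlgebra

theorem It_hom : (It m).IsHomogeneous (homogeneousSubmodule (Fin (2 * m) × Fin (2 * m)) ℂ) := by
  apply Ideal.homogeneous_span
  rintro x (hx | ⟨⟨i, j⟩, rfl⟩)
  · rw [Set.mem_singleton_iff.mp hx]
    exact ⟨1, tr_hom⟩
  · exact ⟨2, gen_hom i j⟩

theorem I0_le : I0 (2 * m) ≤ It m ⊔ Ideal.span {tau m} := by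
  refine Ideal.span_le.mpr ?_
  rintro x (hx | ⟨⟨i, j⟩, rfl⟩)
  · rw [Set.mem_singleton_iff.mp hx]
    exact (le_sup_left : It m ≤ _) (Ideal.subset_span (Or.inl rfl))
  · have h : (gX (2 * m) * gX (2 * m)) i j = gen i j +
        tau m * (1 : Matrix (Fin (2 * m)) (Fin (2 * m)) (Pn (2 * m))) i j := by
      unfold gen; ring
    change (gX (2 * m) * gX (2 * m)) i j ∈ _
    rw [h]
    refine add_mem ((le_sup_left : It m ≤ _) (Ideal.subset_span (Or.inr ⟨(i, j), rfl⟩))) ?_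
    exact (le_sup_right : Ideal.span {tau m} ≤ _)
      (Ideal.mul_mem_right _ _ (Ideal.mem_span_singleton_self _))

theorem evm_sq {n : ℕ} (Y : Matrix (Fin n) (Fin n) ℂ) (i j : Fin n) :
    evm Y ((gX n * gX n) i j) = (Y * Y) i j := by
  rw [Matrix.mul_apply, Matrix.mul_apply, map_sum]
  refine Finset.sum_congr rfl fun k _ => ?_
  rw [map_mul, gX_apply, gX_apply, evm_X, evm_X]

theorem evm_tr {n : ℕ} (Y : Matrix (Fin n) (Fin n) ℂ) : evm Y (gX n).trace = Y.trace := by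
  rw [Matrix.trace, map_sum, Matrix.trace]
  exact Finset.sum_congr rfl fun i _ => evm_X Y (i, i)

theorem evm_tau (Y : Matrix (Fin (2 * m)) (Fin (2 * m)) ℂ) :
    evm Y (tau m) = (Y * Y).trace / (2 * m) := by
  have : evm Y (C ((2 * m : ℂ)⁻¹)) = (2 * m : ℂ)⁻¹ := (evm Y).commutes _
  rw [tau, map_mul, this, Matrix.trace, map_sum, Matrix.trace, div_eq_inv_mul]
  congr 1
  exact Finset.sum_congr rfl fun i _ => evm_sq Y i i

theorem evm_gen (Y : Matrix (Fin (2 * m)) (Fin (2 * m)) ℂ) (i j : Fin (2 * m)) :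
    evm Y (gen i j) = (Y * Y) i j - ((Y * Y).trace / (2 * m)) *
      (1 : Matrix (Fin (2 * m)) (Fin (2 * m)) ℂ) i j := by
  rw [gen, map_sub, map_mul, evm_sq, evm_tau, Matrix.one_apply, Matrix.one_apply]
  split_ifs <;> simp

theorem cone_sq (t : ℂ) (g : Matrix.GeneralLinearGroup (Fin (2 * m)) ℂ) :
    (t • ((↑g : Matrix (Fin (2 * m)) (Fin (2 * m)) ℂ) * Dm m *
      (↑g⁻¹ : Matrix (Fin (2 * m)) (Fin (2 * m)) ℂ))) *
    (t • ((↑g : Matrix (Fin (2 * m)) (Fin (2 * m)) ℂ) * Dm m *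
      (↑g⁻¹ : Matrix (Fin (2 * m)) (Fin (2 * m)) ℂ))) =
    (t * t) • (1 : Matrix (Fin (2 * m)) (Fin (2 * m)) ℂ) := by
  rw [smul_mul_smul_comm]
  congr 1
  calc _ = (↑g : Matrix (Fin (2 * m)) (Fin (2 * m)) ℂ) * Dm m *
        ((↑g⁻¹ : Matrix (Fin (2 * m)) (Fin (2 * m)) ℂ) * ↑g) * Dm m *
        (↑g⁻¹ : Matrix (Fin (2 * m)) (Fin (2 * m)) ℂ) := by simp only [mul_assoc]
    _ = (↑g : Matrix (Fin (2 * m)) (Fin (2 * m)) ℂ) * (Dm m * Dm m) *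
        (↑g⁻¹ : Matrix (Fin (2 * m)) (Fin (2 * m)) ℂ) := by
      rw [Units.inv_mul]; simp only [mul_assoc, one_mul]
    _ = 1 := by rw [Dm_sq, mul_one, Units.mul_inv]

theorem cone_tr (t : ℂ) (g : Matrix.GeneralLinearGroup (Fin (2 * m)) ℂ) :
    (t • ((↑g : Matrix (Fin (2 * m)) (Fin (2 * m)) ℂ) * Dm m *
      (↑g⁻¹ : Matrix (Fin (2 * m)) (Fin (2 * m)) ℂ))).trace = 0 := by
  rw [Matrix.trace_smul, Matrix.trace_mul_comm, ← mul_assoc, Units.inv_mul, one_mul, Dm_tr,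
    smul_zero]

theorem cone_tau (hm : 2 ≤ m) (t : ℂ) (g : Matrix.GeneralLinearGroup (Fin (2 * m)) ℂ) :
    evm (t • ((↑g : Matrix (Fin (2 * m)) (Fin (2 * m)) ℂ) * Dm m *
      (↑g⁻¹ : Matrix (Fin (2 * m)) (Fin (2 * m)) ℂ))) (tau m) = t * t := by
  rw [evm_tau, cone_sq, Matrix.trace_smul, Matrix.trace_one]
  have : (m : ℂ) ≠ 0 := by
    have : m ≠ 0 := by omega
    exact_mod_cast this
  simp
  field_simp

theorem It_vanC (hm : 2 ≤ m) (f : Pn (2 * m)) (hf : f ∈ It m) : VanC f := by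
  intro t ht g
  set Y := t • ((↑g : Matrix (Fin (2 * m)) (Fin (2 * m)) ℂ) * Dm m *
      (↑g⁻¹ : Matrix (Fin (2 * m)) (Fin (2 * m)) ℂ)) with hY
  have h1 : It m ≤ RingHom.ker (evm Y) := by
    refine Ideal.span_le.mpr ?_
    rintro x (hx | ⟨⟨i, j⟩, rfl⟩)
    · rw [Set.mem_singleton_iff.mp hx]
      change evm Y _ = 0
      rw [evm_tr, hY, cone_tr]
    · change evm Y (gen i j) = 0
      have h2 := cone_tau hm t g
      rw [← hY, evm_tau] at h2
      rw [evm_gen, h2, hY, cone_sq]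
      simp
  exact h1 hf

theorem mem_It_hom (hm : 2 ≤ m) (d : ℕ) : ∀ f : Pn (2 * m), f.IsHomogeneous d → VanC f →
    f ∈ It m := by
  induction d using Nat.strong_induction_on with
  | _ d ih =>
  intro f hd hf
  have h1 := I0_le (mem_I0 d f hd hf.vanN)
  obtain ⟨p, hp, q, hq, hpq⟩ := Submodule.mem_sup.mp h1
  obtain ⟨a, rfl⟩ := Ideal.mem_span_singleton'.mp hq
  have h2 : homogeneousComponent d f = f := by
    rw [homogeneousComponent_of_mem hd, if_pos rfl]
  have hpd : homogeneousComponent d p ∈ It m :=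
    (mem_iff_homogeneousComponent_mem It_hom p).mp hp d
  have h3 : homogeneousComponent d (a * tau m) = ∑ e ∈ Finset.range (a.totalDegree + 1),
      if d = e + 2 then homogeneousComponent e a * tau m else 0 := by
    conv_lhs => rw [← sum_homogeneousComponent a]
    rw [Finset.sum_mul, map_sum]
    refine Finset.sum_congr rfl fun e _ => ?_
    exact homogeneousComponent_of_mem ((homogeneousComponent_isHomogeneous e a).mul tau_hom)
  rw [← h2, ← hpq, map_add]
  refine add_mem hpd ?_
  have h4 : VanC (homogeneousComponent d (a * tau m)) := by
    have : homogeneousComponent d (a * tau m) = f - homogeneousComponent d p := by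
      rw [eq_sub_iff_add_eq, add_comm, ← map_add, hpq, h2]
    intro t ht g
    rw [this, map_sub, hf t ht g, It_vanC hm _ hpd t ht g, sub_zero]
  by_cases hde : ∃ e ∈ Finset.range (a.totalDegree + 1), d = e + 2
  · obtain ⟨e, he, rfl⟩ := hde
    have h5 : homogeneousComponent (e + 2) (a * tau m) = homogeneousComponent e a * tau m := by
      rw [h3, Finset.sum_eq_single_of_mem e he]
      · rw [if_pos rfl]
      · intro e' _ hne
        rw [if_neg (by omega)]
    rw [h5] at h4 ⊢
    refine Ideal.mul_mem_right _ _ (ih e (by omega) _ (homogeneousComponent_isHomogeneous e a) ?_)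
    intro t ht g
    have h6 := h4 t ht g
    rw [map_mul, cone_tau hm] at h6
    exact (mul_eq_zero.mp h6).resolve_right (mul_ne_zero ht ht)
  · rw [h3, Finset.sum_eq_zero]
    · exact zero_mem _
    · intro e he
      rw [if_neg fun h => hde ⟨e, he, h⟩]

theorem mem_It_iff (hm : 2 ≤ m) (f : Pn (2 * m)) : f ∈ It m ↔ VanC f := by
  refine ⟨It_vanC hm f, fun hf => ?_⟩
  rw [mem_iff_homogeneousComponent_mem It_hom]
  exact fun d => mem_It_hom hm d _ (homogeneousComponent_isHomogeneous d f) (hf.comp f d)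

/-- Parameter ring for the cone. -/
abbrev Qn (m : ℕ) := MvPolynomial (Option (Fin (2 * m) × Fin (2 * m))) ℂ

/-- Generic group element. -/
def gG (m : ℕ) : Matrix (Fin (2 * m)) (Fin (2 * m)) (Qn m) := Matrix.of fun i j => X (some (i, j))

/-- Generic parametrization of the cone. -/
def Phi (m : ℕ) : Pn (2 * m) →ₐ[ℂ] Qn m := aeval fun p =>
  X none * (gG m * (Dm m).map C * (gG m).adjugate :
    Matrix (Fin (2 * m)) (Fin (2 * m)) (Qn m)) p.1 p.2

/-- Evaluation of the parameters. -/
def evq (s : ℂ) (h : Matrix (Fin (2 * m)) (Fin (2 * m)) ℂ) : Qn m →ₐ[ℂ] ℂ :=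
  aeval fun o => o.elim s fun p => h p.1 p.2

theorem evq_gG (s : ℂ) (h : Matrix (Fin (2 * m)) (Fin (2 * m)) ℂ) :
    (gG m).map (evq s h) = h := by
  ext i j
  simp [gG, evq]

theorem evq_Phi (s : ℂ) (h : Matrix (Fin (2 * m)) (Fin (2 * m)) ℂ) (f : Pn (2 * m)) :
    evq s h (Phi m f) = evm (s • (h * Dm m * h.adjugate)) f := by
  have : (evq s h).comp (Phi m) = evm (s • (h * Dm m * h.adjugate)) := by
    apply MvPolynomial.algHom_ext
    intro p
    rw [evm_X, AlgHom.comp_apply, Phi, aeval_X, map_mul]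
    have h1 : evq s h (X none) = s := by simp [evq]
    have h2 : (gG m * (Dm m).map C * (gG m).adjugate :
        Matrix (Fin (2 * m)) (Fin (2 * m)) (Qn m)).map (evq s h) = h * Dm m * h.adjugate := by
      rw [Matrix.map_mul, Matrix.map_mul, evq_gG]
      congr 1
      · congr 1
        ext i j
        exact (evq s h).commutes _
      · have := AlgHom.map_adjugate (evq s h) (gG m)
        rw [AlgHom.mapMatrix_apply, AlgHom.mapMatrix_apply, evq_gG] at this
        exact this
    rw [h1, ← h2]
    rfl
  rw [← this]
  rfl

theorem evq_det (s : ℂ) (h : Matrix (Fin (2 * m)) (Fin (2 * m)) ℂ) :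
    evq s h (gG m).det = h.det := by
  rw [AlgHom.map_det, AlgHom.mapMatrix_apply, evq_gG]

theorem vanC_iff (f : Pn (2 * m)) : VanC f ↔ Phi m f = 0 := by
  constructor
  · intro hf
    have hdet : (gG m).det ≠ 0 := by
      intro h
      have := evq_det (m := m) 0 1
      rw [h] at this
      simp at this
    have h0 : Phi m f * (X none * (gG m).det) = 0 := by
      apply MvPolynomial.funext
      intro x
      let s := x none
      let h : Matrix (Fin (2 * m)) (Fin (2 * m)) ℂ := Matrix.of fun i j => x (some (i, j))
      have hx : ∀ q, eval x q = evq s h q := by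
        intro q
        have : x = fun o => o.elim s fun p => h p.1 p.2 := by
          funext o
          cases o <;> rfl
        conv_lhs => rw [this]
        rw [evq, aeval_eq_eval]
      rw [hx, map_zero, map_mul, map_mul, evq_Phi, evq_det]
      have h1 : evq s h (X none) = s := by simp [evq]
      rw [h1]
      by_cases hs : s * h.det = 0
      · rw [hs, mul_zero]
      · have hd : h.det ≠ 0 := right_ne_zero_of_mul hs
        let g : Matrix.GeneralLinearGroup (Fin (2 * m)) ℂ :=
          Matrix.GeneralLinearGroup.mk'' h (isUnit_iff_ne_zero.mpr hd)
        have h2 := hf (s * h.det) hs g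
        have h3 : (↑g⁻¹ : Matrix (Fin (2 * m)) (Fin (2 * m)) ℂ) = h⁻¹ := rfl
        have h4 : (↑g : Matrix (Fin (2 * m)) (Fin (2 * m)) ℂ) = h := rfl
        have h5 : h.adjugate = h.det • h⁻¹ := by
          rw [Matrix.inv_def, smul_smul, Ring.mul_inverse_cancel _ (isUnit_iff_ne_zero.mpr hd),
            one_smul]
        rw [h3, h4] at h2
        rw [h5, mul_smul_comm, smul_smul, h2, zero_mul]
    exact (mul_eq_zero.mp h0).resolve_right (mul_ne_zero (X_ne_zero _) hdet)
  · intro hf t ht g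
    set h : Matrix (Fin (2 * m)) (Fin (2 * m)) ℂ := ↑g with hh
    have hd : h.det ≠ 0 := by
      rw [hh]
      exact g.isUnit.map Matrix.detMonoidHom |>.ne_zero
    have h1 := evq_Phi (t / h.det) h f
    rw [hf, map_zero] at h1
    have h5 : h.adjugate = h.det • (↑g⁻¹ : Matrix (Fin (2 * m)) (Fin (2 * m)) ℂ) := by
      rw [Matrix.coe_units_inv, ← hh, Matrix.inv_def, smul_smul,
        Ring.mul_inverse_cancel _ (isUnit_iff_ne_zero.mpr hd), one_smul]
    rw [h5, mul_smul_comm, smul_smul, div_mul_cancel₀ _ hd] at h1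
    exact h1.symm

end cone
end SqZ

namespace SqZ
open MvPolynomial

/-- Restriction of a polynomial to the traceless matrices. -/
def resP (n : ℕ) : Pn n →ₐ[ℂ] polyFns n :=
  aeval fun p => ⟨fun X => X.1 p.1 p.2, Algebra.subset_adjoin ⟨p.1, p.2, rfl⟩⟩

theorem resP_apply {n : ℕ} (P : Pn n) (X : slS n) :
    (resP n P : slS n → ℂ) X = evm X.1 P := by
  have : ((Pi.evalAlgHom ℂ (fun _ : slS n => ℂ) X).comp (polyFns n).val).comp (resP n) =
      evm X.1 := by
    apply MvPolynomial.algHom_ext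
    intro p
    rw [evm_X]
    simp [resP]
  rw [← this]
  rfl

theorem resP_surj {n : ℕ} : Function.Surjective (resP n) := by
  rintro ⟨p, hp⟩
  induction hp using Algebra.adjoin_induction with
  | mem x hx =>
    obtain ⟨i, j, rfl⟩ := hx
    exact ⟨X (i, j), by simp [resP]⟩
  | algebraMap r => exact ⟨algebraMap _ _ r, by rw [AlgHom.commutes]; rfl⟩
  | add x y hx hy h1 h2 =>
    obtain ⟨P, hP⟩ := h1
    obtain ⟨Q, hQ⟩ := h2
    exact ⟨P + Q, by rw [map_add, hP, hQ]; rfl⟩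
  | mul x y hx hy h1 h2 =>
    obtain ⟨P, hP⟩ := h1
    obtain ⟨Q, hQ⟩ := h2
    exact ⟨P * Q, by rw [map_mul, hP, hQ]; rfl⟩

/-- The ideal of the statement. -/
def Ist (m : ℕ) : Ideal (polyFns (2 * m)) :=
  Ideal.span {p : polyFns (2 * m) | ∃ i j : Fin (2 * m),
      (p : ↥(slS (2 * m)) → ℂ) = fun X =>
        (X.1 * X.1) i j - ((X.1 * X.1).trace / (2 * m)) * (1 : Mat (2 * m)) i j}

variable {m : ℕ}

theorem resP_mem (hm : 2 ≤ m) (P : Pn (2 * m)) : resP (2 * m) P ∈ Ist m ↔ VanC P := by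
  constructor
  · intro h t ht g
    have hX : t • ((↑g : Mat (2 * m)) * Dm m * (↑g⁻¹ : Mat (2 * m))) ∈ slS (2 * m) := cone_tr t g
    set X : slS (2 * m) := ⟨_, hX⟩ with hXdef
    have h1 : Ist m ≤ RingHom.ker
        ((Pi.evalAlgHom ℂ (fun _ : slS (2 * m) => ℂ) X).comp (polyFns (2 * m)).val) := by
      rw [Ist, Ideal.span_le]
      rintro p ⟨i, j, hp⟩
      have h2 := It_vanC hm (gen i j) (Ideal.subset_span (Or.inr ⟨(i, j), rfl⟩)) t ht g
      rw [evm_gen] at h2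
      change (p : slS (2 * m) → ℂ) X = 0
      rw [hp]
      exact h2
    have h3 : (resP (2 * m) P : slS (2 * m) → ℂ) X = 0 := h1 h
    rwa [resP_apply] at h3
  · intro h
    rw [← mem_It_iff hm] at h
    have h1 : It m ≤ (Ist m).comap (resP (2 * m)) := by
      rw [It, Ideal.span_le]
      rintro p (hp | ⟨⟨i, j⟩, rfl⟩)
      · rw [Set.mem_singleton_iff] at hp
        subst hp
        have : resP (2 * m) (gX (2 * m)).trace = 0 := by
          apply Subtype.ext
          funext X
          rw [resP_apply, evm_tr]
          exact X.2
        change resP (2 * m) _ ∈ Ist m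
        rw [this]
        exact zero_mem _
      · refine Ideal.subset_span ⟨i, j, ?_⟩
        funext X
        rw [resP_apply, evm_gen]
    exact h1 h

theorem Ist_prime (hm : 2 ≤ m) : (Ist m).IsPrime := by
  constructor
  · rw [Ideal.ne_top_iff_one]
    intro h
    rw [← map_one (resP (2 * m)), resP_mem hm] at h
    have := h 1 one_ne_zero 1
    rw [map_one] at this
    exact one_ne_zero this
  · intro p q h
    obtain ⟨P, rfl⟩ := resP_surj p
    obtain ⟨Q, rfl⟩ := resP_surj q
    rw [← map_mul, resP_mem hm, vanC_iff, map_mul, mul_eq_zero] at h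
    simpa only [resP_mem hm, vanC_iff] using h

end SqZ

theorem stmt_14 (m : ℕ) (hm : 2 ≤ m)
    -- `I` is the ideal of `ℂ[sl_{2m}]` generated by the entries of
    -- `X ↦ X² − (tr(X²)/2m)·I_{2m}`
    (I : Ideal (polyFns (2 * m)))
    (hI : I = Ideal.span {p : polyFns (2 * m) | ∃ i j : Fin (2 * m),
      (p : ↥(slS (2 * m)) → ℂ) = fun X =>
        (X.1 * X.1) i j - ((X.1 * X.1).trace / (2 * m)) * (1 : Mat (2 * m)) i j})
    -- `D = diag(1,…,1,−1,…,−1)` with `m` ones and `m` minus-ones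
    (D : Mat (2 * m))
    (hD : D = Matrix.diagonal fun i : Fin (2 * m) => if (i : ℕ) < m then (1 : ℂ) else -1) :
    I.IsPrime ∧
    ∀ p : polyFns (2 * m), p ∈ I ↔
      ∀ X ∈ slZclosure (2 * m) {X : ↥(slS (2 * m)) | ∃ t : ℂ, t ≠ 0 ∧ ∃ g : GLn (2 * m),
        X.1 = t • ((↑g : Mat (2 * m)) * D * (↑g⁻¹ : Mat (2 * m)))},
        (p : ↥(slS (2 * m)) → ℂ) X = 0 := by
  subst hD
  subst hI
  refine ⟨SqZ.Ist_prime hm, fun p => ?_⟩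
  obtain ⟨P, rfl⟩ := SqZ.resP_surj p
  refine (SqZ.resP_mem hm P).trans ⟨fun h X hX => ?_, fun h t ht g => ?_⟩
  · refine hX {X | ∀ q ∈ ({(SqZ.resP (2 * m) P : ↥(slS (2 * m)) → ℂ)} :
      Set (↥(slS (2 * m)) → ℂ)), q X = 0} ⟨⟨_, ?_, rfl⟩, ?_⟩ _ rfl
    · rintro q rfl
      exact (SqZ.resP (2 * m) P).2
    · rintro Y ⟨t, ht, g, hY⟩ q rfl
      rw [SqZ.resP_apply, hY]
      exact h t ht g
  · have h1 := h ⟨_, SqZ.cone_tr t g⟩ fun C hC => hC.2 ⟨t, ht, g, rfl⟩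
    rwa [SqZ.resP_apply] at h1
end
end

section
/- Let r ≥ 5. Realize so_{2r}(ℂ) = {X ∈ gl_{2r}(ℂ) : Xᵀ·J + J·X = 0} with J = [[0, I_r],[I_r, 0]], let SO_J(ℂ) = {g ∈ GL_{2r}(ℂ) : gᵀ·J·g = J, det g = 1}, and for X ∈ so_{2r}(ℂ) put q(X) = Σ_{i=2}^{r} X_{i,1}·X_{r+i,1}. If X ∈ so_{2r}(ℂ) is nilpotent and q(g·X·g⁻¹) = 0 for every g ∈ SO_J(ℂ), then X² = 0; moreover, if r is odd then rank X ≤ r − 1. (Thus X lies in the closure of the nilpotent orbit of partition (2^{r−1},1²) when r is odd, and in the union of the closures of the two very even nilpotent orbits of partition (2^r) when r is even.) -/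
open Matrix

noncomputable section

abbrev MatB (r : ℕ) := Matrix (Fin r ⊕ Fin r) (Fin r ⊕ Fin r) ℂ

abbrev GLB (r : ℕ) := Matrix.GeneralLinearGroup (Fin r ⊕ Fin r) ℂ

/-- A complex skew-symmetric matrix has even rank. -/
theorem skew_rank_not_odd {n : Type*} [Fintype n] [DecidableEq n] (A : Matrix n n ℂ)
    (hA : Aᵀ = -A) : ¬ Odd A.rank := by
  intro hodd
  have hsk : ∀ x y : n → ℂ, x ⬝ᵥ A *ᵥ y = -(y ⬝ᵥ A *ᵥ x) := by
    intro x y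
    rw [dotProduct_mulVec, dotProduct_comm, ← mulVec_transpose, hA, neg_mulVec, dotProduct_neg]
  obtain ⟨W, hW⟩ := Submodule.exists_isCompl (LinearMap.ker A.mulVecLin)
  have hfin : Module.finrank ℂ W = A.rank := by
    have h1 := Submodule.finrank_add_eq_of_isCompl hW
    have h2 := A.mulVecLin.finrank_range_add_finrank_ker
    unfold Matrix.rank
    omega
  let b := Module.finBasis ℂ W
  let M : Matrix (Fin (Module.finrank ℂ W)) (Fin (Module.finrank ℂ W)) ℂ :=
    fun i j => (b i : n → ℂ) ⬝ᵥ A *ᵥ (b j : n → ℂ)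
  have hM : Mᵀ = -M := by
    ext i j
    exact hsk _ _
  have hdet : M.det = 0 := by
    have h := M.det_transpose
    have hodd' : Odd (Module.finrank ℂ W) := hfin ▸ hodd
    rw [hM, det_neg, Fintype.card_fin, hodd'.neg_one_pow] at h
    linear_combination (-1/2 : ℂ) * h
  obtain ⟨c, hc, hMc⟩ := Matrix.exists_mulVec_eq_zero_iff.mpr hdet
  let y : W := ∑ j, c j • b j
  have hy : ∀ i, (b i : n → ℂ) ⬝ᵥ A *ᵥ (y : n → ℂ) = 0 := by
    intro i
    have h := congrFun hMc i
    simp only [mulVec, dotProduct, Pi.zero_apply] at h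
    rw [← h]
    have : A *ᵥ (y : n → ℂ) = ∑ j, c j • A *ᵥ (b j : n → ℂ) := by
      simp [y, mulVec_sum, mulVec_smul]
    rw [this, dotProduct_sum]
    refine Finset.sum_congr rfl fun j _ => ?_
    rw [dotProduct_smul, smul_eq_mul, mul_comm]
  have hyW : ∀ w : W, (w : n → ℂ) ⬝ᵥ A *ᵥ (y : n → ℂ) = 0 := by
    intro w
    have hw : (w : n → ℂ) = ∑ j, b.repr w j • (b j : n → ℂ) := by
      conv_lhs => rw [← b.sum_repr w]
      simp only [Submodule.coe_sum, Submodule.coe_smul]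
    rw [hw, sum_dotProduct]
    refine Finset.sum_eq_zero fun j _ => ?_
    rw [smul_dotProduct, hy, smul_zero]
  have hAy : A *ᵥ (y : n → ℂ) = 0 := by
    apply dotProduct_eq_zero
    intro z
    rw [dotProduct_comm]
    have hz : z ∈ LinearMap.ker A.mulVecLin ⊔ W := by
      rw [hW.sup_eq_top]; trivial
    obtain ⟨k, hk, w, hw, rfl⟩ := Submodule.mem_sup.mp hz
    have hk' : A *ᵥ k = 0 := by simpa using hk
    rw [add_dotProduct, hyW ⟨w, hw⟩, hsk, hk']
    simp
  have hy0 : y = 0 := by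
    have := (Submodule.disjoint_def.mp hW.disjoint) (y : n → ℂ) (by simpa using hAy) y.2
    exact Subtype.ext this
  apply hc
  funext j
  exact Fintype.linearIndependent_iff.mp b.linearIndependent c hy0 j

/-- `GL` acts transitively on nonzero vectors. -/
theorem exists_inv_col {r : ℕ} (z : Fin r) (v : Fin r → ℂ) (hv : v ≠ 0) :
    ∃ P Q : Matrix (Fin r) (Fin r) ℂ, P * Q = 1 ∧ Q * P = 1 ∧ P *ᵥ Pi.single z 1 = v := by
  have hz : (Pi.single z 1 : Fin r → ℂ) ≠ 0 := by simp
  obtain ⟨e, he⟩ := SeparatingDual.exists_continuousLinearEquiv_apply_eq (R := ℂ) hz hv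
  have h1 : LinearMap.toMatrix' (e.toLinearEquiv : (Fin r → ℂ) →ₗ[ℂ] (Fin r → ℂ)) *
      LinearMap.toMatrix' (e.toLinearEquiv.symm : (Fin r → ℂ) →ₗ[ℂ] (Fin r → ℂ)) = 1 := by
    rw [← LinearMap.toMatrix'_comp]; simp
  refine ⟨_, _, h1, mul_eq_one_comm.mp h1, ?_⟩
  rw [LinearMap.toMatrix'_mulVec]
  exact he

/-- Nonzero isotropic vectors (with nonzero first half) are first columns of elements of `SO_J`. -/
theorem exists_SO_col {r : ℕ} (z : Fin r) (v w : Fin r → ℂ) (hv : v ≠ 0) (hvw : v ⬝ᵥ w = 0) :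
    ∃ g : MatB r, gᵀ * fromBlocks 0 1 1 0 * g = fromBlocks 0 1 1 0 ∧ g.det = 1 ∧
      g *ᵥ Pi.single (Sum.inl z) 1 = Sum.elim v w := by
  obtain ⟨P, Q, hPQ, hQP, hP⟩ := exists_inv_col z v hv
  obtain ⟨i, hi⟩ : ∃ i, v i ≠ 0 := by
    by_contra! h
    exact hv (funext h)
  let u : Fin r → ℂ := Pi.single i (v i)⁻¹
  have hu : u ⬝ᵥ v = 1 := by simp [u, hi]
  let N : Matrix (Fin r) (Fin r) ℂ := vecMulVec w u - vecMulVec u w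
  have hN : Nᵀ = -N := by
    simp [N, transpose_vecMulVec]
  have hNv : N *ᵥ v = w := by
    simp only [N, sub_mulVec, vecMulVec_mulVec, hu]
    rw [dotProduct_comm w v, hvw]
    simp
  have hPQt : Pᵀ * Qᵀ = 1 := by rw [← transpose_mul, hQP, transpose_one]
  refine ⟨fromBlocks 1 0 N 1 * fromBlocks P 0 0 Qᵀ, ?_, ?_, ?_⟩
  · simp only [fromBlocks_multiply, fromBlocks_transpose, transpose_mul, hN]
    simp [fromBlocks_multiply, hPQt, hQP, hN, Matrix.mul_assoc]
  · rw [det_mul, det_fromBlocks_zero₁₂, det_fromBlocks_zero₁₂, det_transpose, ← det_mul P Q, hPQ]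
    simp
  · have hs : (Pi.single (Sum.inl z) 1 : Fin r ⊕ Fin r → ℂ) = Sum.elim (Pi.single z 1) 0 := by
      ext (j | j) <;> simp [Pi.single_apply]
    rw [hs, ← mulVec_mulVec, fromBlocks_mulVec, fromBlocks_mulVec]
    simp only [Sum.elim_comp_inl, Sum.elim_comp_inr, hP, hNv, mulVec_zero, zero_mulVec, add_zero,
      one_mulVec]

/-- A quadratic form vanishing on the isotropic vectors is a multiple of `J`. -/
theorem sym_eq_smul {r : ℕ} (hr : 5 ≤ r) (S : MatB r) (hS : Sᵀ = S)
    (h : ∀ v w : Fin r → ℂ, v ≠ 0 → v ⬝ᵥ w = 0 →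
      Sum.elim v w ⬝ᵥ S *ᵥ Sum.elim v w = 0) :
    ∃ c : ℂ, S = c • fromBlocks 0 1 1 0 := by
  have hsym : ∀ a b, S a b = S b a := fun a b => (congrFun (congrFun hS b) a)
  have el : ∀ i : Fin r, ∀ t : ℂ, (Sum.elim (Pi.single i t) 0 : Fin r ⊕ Fin r → ℂ)
      = Pi.single (Sum.inl i) t := by
    intro i t; ext (j | j) <;> simp [Pi.single_apply]
  have er : ∀ i : Fin r, ∀ t : ℂ, (Sum.elim 0 (Pi.single i t) : Fin r ⊕ Fin r → ℂ)
      = Pi.single (Sum.inr i) t := by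
    intro i t; ext (j | j) <;> simp [Pi.single_apply]
  have hx : ∀ x : Fin r ⊕ Fin r → ℂ, (fun i => x (Sum.inl i)) ≠ 0 →
      (fun i => x (Sum.inl i)) ⬝ᵥ (fun i => x (Sum.inr i)) = 0 → x ⬝ᵥ S *ᵥ x = 0 := by
    intro x h1 h2
    have := h _ _ h1 h2
    have e : Sum.elim (fun i => x (Sum.inl i)) (fun i => x (Sum.inr i)) = x := by
      ext (j | j) <;> rfl
    rwa [e] at this
  let E : Fin r ⊕ Fin r → Fin r ⊕ Fin r → ℂ := fun a => Pi.single a 1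
  have hE : ∀ a b, E a ⬝ᵥ S *ᵥ E b = S a b := by
    intro a b; simp [E]
  have hl : ∀ i, (fun k => E (Sum.inl i) (Sum.inl k)) = Pi.single i 1 := by
    intro i; ext k; simp [E, Pi.single_apply]
  -- evaluate on sums of basis vectors
  have hlli : ∀ i, S (Sum.inl i) (Sum.inl i) = 0 := by
    intro i
    have := hx (E (Sum.inl i)) (by rw [hl]; simp) (by simp [E, dotProduct])
    rwa [hE] at this
  have hll : ∀ i j, S (Sum.inl i) (Sum.inl j) = 0 := by
    intro i j
    by_cases hij : i = j
    · rw [hij, hlli]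
    have := hx (E (Sum.inl i) + E (Sum.inl j))
      (fun h0 => by have := congrFun h0 i; simp [E, hij] at this) (by simp [E, dotProduct])
    simp only [mulVec_add, add_dotProduct, dotProduct_add, hE] at this
    linear_combination (1/2 : ℂ) * this - (1/2 : ℂ) * hlli i - (1/2 : ℂ) * hlli j
      + (1/2 : ℂ) * hsym (Sum.inl i) (Sum.inl j)
  have hlr2 : ∀ i j, i ≠ j → ∀ t : ℂ,
      2 * t * S (Sum.inl i) (Sum.inr j) + t ^ 2 * S (Sum.inr j) (Sum.inr j) = 0 := by
    intro i j hij t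
    have := hx (E (Sum.inl i) + t • E (Sum.inr j))
      (fun h0 => by have := congrFun h0 i; simp [E] at this)
      (by simp [E, dotProduct, Pi.single_apply, Ne.symm hij])
    simp only [mulVec_add, mulVec_smul, add_dotProduct, dotProduct_add, smul_dotProduct,
      dotProduct_smul, smul_eq_mul, hE] at this
    linear_combination this - hlli i + t * hsym (Sum.inl i) (Sum.inr j)
  have hlr : ∀ i j, i ≠ j → S (Sum.inl i) (Sum.inr j) = 0 := by
    intro i j hij
    linear_combination (1/4 : ℂ) * hlr2 i j hij 1 - (1/4 : ℂ) * hlr2 i j hij (-1)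
  have hthird : ∀ j k : Fin r, ∃ i, i ≠ j ∧ i ≠ k := by
    intro j k
    obtain ⟨i, hi⟩ := Finset.exists_mem_notMem_of_card_lt_card
      (s := ({j, k} : Finset (Fin r))) (t := Finset.univ)
      (lt_of_le_of_lt Finset.card_le_two (by simp; omega))
    exact ⟨i, by simpa using hi⟩
  have hrri : ∀ j, S (Sum.inr j) (Sum.inr j) = 0 := by
    intro j
    obtain ⟨i, hi, -⟩ := hthird j j
    linear_combination (1/2 : ℂ) * hlr2 i j hi 1 + (1/2 : ℂ) * hlr2 i j hi (-1)
  have hrr : ∀ j k, S (Sum.inr j) (Sum.inr k) = 0 := by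
    intro j k
    obtain ⟨i, hij, hik⟩ := hthird j k
    have := hx (E (Sum.inl i) + E (Sum.inr j) + E (Sum.inr k))
      (fun h0 => by have := congrFun h0 i; simp [E] at this)
      (by simp [E, dotProduct, Pi.single_apply, hij, hik])
    simp only [mulVec_add, add_dotProduct, dotProduct_add, hE, hlli, hrri, hlr i j hij,
      hlr i k hik, hsym (Sum.inr _) (Sum.inl i), hsym (Sum.inr k) (Sum.inr j)] at this
    linear_combination (1/2 : ℂ) * this
  have hdiag : ∀ i j, S (Sum.inl i) (Sum.inr i) = S (Sum.inl j) (Sum.inr j) := by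
    intro i j
    by_cases hij : i = j
    · rw [hij]
    have hji : j ≠ i := fun h => hij h.symm
    have := hx (E (Sum.inl i) + E (Sum.inl j) + E (Sum.inr i) + (-1 : ℂ) • E (Sum.inr j))
      (fun h0 => by have := congrFun h0 i; simp [E, hij] at this)
      (by simp [E, dotProduct, Pi.single_apply, add_mul, mul_add, Finset.sum_add_distrib, hij, hji])
    simp only [mulVec_add, mulVec_smul, add_dotProduct, dotProduct_add, smul_dotProduct,
      dotProduct_smul, smul_eq_mul, hE, hll, hrr, hlr i j hij, hlr j i hji,
      hsym (Sum.inr _) (Sum.inl _)] at this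
    linear_combination (1/2 : ℂ) * this
  let z : Fin r := ⟨0, by omega⟩
  refine ⟨S (Sum.inl z) (Sum.inr z), ?_⟩
  ext (i | i) (j | j)
  · simp [hll]
  · by_cases hij : i = j
    · subst hij; simp [hdiag i z]
    · simp [hlr i j hij, one_apply, hij]
  · rw [hsym]
    by_cases hij : j = i
    · subst hij; simp [hdiag j z]
    · simp [hlr j i hij, one_apply, Ne.symm hij]
  · simp [hrr]

theorem stmt_16 (r : ℕ) (hr : 5 ≤ r)
    (J : MatB r) (hJ : J = Matrix.fromBlocks 0 1 1 0)
    -- `so_{2r}(ℂ) = {X : Xᵀ·J + J·X = 0}`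
    (so : Set (MatB r)) (hso : so = {X | Xᵀ * J + J * X = 0})
    -- `SO_J(ℂ)`
    (SOJ : Set (GLB r))
    (hSOJ : SOJ = {g : GLB r | (↑g : MatB r)ᵀ * J * (↑g : MatB r) = J ∧
      (↑g : MatB r).det = 1})
    -- `q(X) = Σ_{i=2}^r X_{i,1}·X_{r+i,1}`
    (q : MatB r → ℂ)
    (hq : q = fun X => ∑ i : Fin r, if (i : ℕ) = 0 then 0 else
      X (Sum.inl i) (Sum.inl ⟨0, by omega⟩) * X (Sum.inr i) (Sum.inl ⟨0, by omega⟩))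
    (X : MatB r) (hX : X ∈ so) (hXnil : IsNilpotent X)
    (hvanish : ∀ g ∈ SOJ, q ((↑g : MatB r) * X * (↑g⁻¹ : MatB r)) = 0) :
    X * X = 0 ∧ (Odd r → X.rank ≤ r - 1) := by
  subst hJ hso hSOJ
  set J : MatB r := fromBlocks 0 1 1 0 with hJ
  have hX' : Xᵀ * J + J * X = 0 := hX
  have hJJ : J * J = 1 := by
    simp [hJ, fromBlocks_multiply, fromBlocks_one]
  have hJt : Jᵀ = J := by simp [hJ, fromBlocks_transpose]
  have hXt : Xᵀ * J = -(J * X) := eq_neg_of_add_eq_zero_left hX'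
  let z : Fin r := ⟨0, by omega⟩
  -- `2 q(Y)` is the value of the form `J` on the first column of `Y`
  have hq2 : ∀ Y : MatB r, Yᵀ * J + J * Y = 0 →
      2 * q Y = (Yᵀ * J * Y) (Sum.inl z) (Sum.inl z) := by
    intro Y hY
    have h0 : Y (Sum.inr z) (Sum.inl z) = 0 := by
      have := congrFun (congrFun hY (Sum.inl z)) (Sum.inl z)
      simp [hJ, Matrix.add_apply, Matrix.mul_apply, Fintype.sum_sum_type, one_apply] at this
      exact this
    have hqq : q Y = ∑ i, Y (Sum.inl i) (Sum.inl z) * Y (Sum.inr i) (Sum.inl z) := by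
      rw [hq]
      refine Finset.sum_congr rfl fun i _ => ?_
      split_ifs with hi
      · have : i = z := Fin.ext hi
        rw [this, h0, mul_zero]
      · rfl
    rw [hqq]
    simp [hJ, Matrix.mul_apply, Fintype.sum_sum_type, one_apply]
    rw [two_mul]
    congr 1
    exact Finset.sum_congr rfl fun i _ => mul_comm _ _
  let S : MatB r := Xᵀ * J * X
  have hSt : Sᵀ = S := by
    simp only [S, transpose_mul, transpose_transpose, hJt, Matrix.mul_assoc]
  have hiso : ∀ v w : Fin r → ℂ, v ≠ 0 → v ⬝ᵥ w = 0 →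
      Sum.elim v w ⬝ᵥ S *ᵥ Sum.elim v w = 0 := by
    intro v w hv hvw
    obtain ⟨g, hg, hgd, hgz⟩ := exists_SO_col z v w hv hvw
    have hgd' : IsUnit g.det := by rw [hgd]; exact isUnit_one
    have hgi : g * g⁻¹ = 1 := mul_nonsing_inv g hgd'
    have hig : g⁻¹ * g = 1 := nonsing_inv_mul g hgd'
    have hgit : (g⁻¹)ᵀ * gᵀ = 1 := by rw [← transpose_mul, hgi, transpose_one]
    have hinv : (g⁻¹)ᵀ * J * g⁻¹ = J := by
      calc (g⁻¹)ᵀ * J * g⁻¹ = (g⁻¹)ᵀ * (gᵀ * J * g) * g⁻¹ := by rw [hg]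
        _ = ((g⁻¹)ᵀ * gᵀ) * J * (g * g⁻¹) := by simp only [Matrix.mul_assoc]
        _ = J := by rw [hgit, hgi]; simp
    let G : GLB r := ⟨g⁻¹, g, hig, hgi⟩
    have hv0 : q (g⁻¹ * X * g) = 0 := hvanish G ⟨hinv, by
      change (g⁻¹).det = 1
      rw [det_nonsing_inv, hgd]; simp⟩
    -- transport of `J` through `g`
    have hJg : (g⁻¹)ᵀ * J = J * g := by
      calc (g⁻¹)ᵀ * J = (g⁻¹)ᵀ * J * (g⁻¹ * g) := by rw [hig, Matrix.mul_one]
        _ = ((g⁻¹)ᵀ * J * g⁻¹) * g := by simp only [Matrix.mul_assoc]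
        _ = J * g := by rw [hinv]
    have hgJ : gᵀ * J = J * g⁻¹ := by
      calc gᵀ * J = gᵀ * J * (g * g⁻¹) := by rw [hgi, Matrix.mul_one]
        _ = (gᵀ * J * g) * g⁻¹ := by simp only [Matrix.mul_assoc]
        _ = J * g⁻¹ := by rw [hg]
    have hskew : (g⁻¹ * X * g)ᵀ * J + J * (g⁻¹ * X * g) = 0 := by
      have e1 : (g⁻¹ * X * g)ᵀ * J = gᵀ * (Xᵀ * J) * g := by
        rw [transpose_mul, transpose_mul]
        simp only [Matrix.mul_assoc]
        rw [hJg]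
      have e2 : J * (g⁻¹ * X * g) = gᵀ * (J * X) * g := by
        simp only [← Matrix.mul_assoc]
        rw [hgJ]
      rw [e1, e2, hXt]
      simp
    have hval := hq2 _ hskew
    rw [hv0, mul_zero] at hval
    have e3 : (g⁻¹ * X * g)ᵀ * J * (g⁻¹ * X * g) = gᵀ * S * g := by
      calc (g⁻¹ * X * g)ᵀ * J * (g⁻¹ * X * g)
          = gᵀ * Xᵀ * ((g⁻¹)ᵀ * J * g⁻¹) * X * g := by
            simp only [transpose_mul, Matrix.mul_assoc]
        _ = gᵀ * S * g := by rw [hinv]; simp only [S, Matrix.mul_assoc]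
    rw [e3] at hval
    have e4 : (gᵀ * S * g) (Sum.inl z) (Sum.inl z) =
        (Pi.single (Sum.inl z) 1 : Fin r ⊕ Fin r → ℂ) ⬝ᵥ
          (gᵀ * S * g) *ᵥ (Pi.single (Sum.inl z) 1) := by simp
    rw [e4, ← mulVec_mulVec, hgz, ← mulVec_mulVec, dotProduct_mulVec, vecMul_transpose, hgz] at hval
    exact hval.symm
  obtain ⟨c, hc⟩ := sym_eq_smul hr S hSt hiso
  have hXX : X * X = -(c • (1 : MatB r)) := by
    have h1 : S = -(J * (X * X)) := by
      change Xᵀ * J * X = _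
      rw [hXt, Matrix.neg_mul, Matrix.mul_assoc]
    have h2 : J * (J * (X * X)) = J * (-(c • J)) := by
      congr 1
      rw [← hc, h1, neg_neg]
    rw [← Matrix.mul_assoc, hJJ, Matrix.one_mul] at h2
    rw [h2]
    simp [hJJ]
  have hc0 : c = 0 := by
    obtain ⟨k, hk⟩ := hXnil
    have h1 : (X * X) ^ k = 0 := by
      rw [← pow_two, ← pow_mul, mul_comm, pow_mul, hk, zero_pow two_ne_zero]
    rw [hXX, ← neg_smul, smul_pow, one_pow] at h1
    have := congrFun (congrFun h1 (Sum.inl z)) (Sum.inl z)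
    simp at this
    exact this.1
  have hsq : X * X = 0 := by rw [hXX, hc0]; simp
  refine ⟨hsq, fun hodd => ?_⟩
  have hle := rank_add_rank_le_card_of_mul_eq_zero hsq
  rw [Fintype.card_sum, Fintype.card_fin] at hle
  have hrk : (J * X).rank = X.rank :=
    rank_mul_eq_right_of_isUnit_det J X ((isUnit_iff_isUnit_det J).mp ⟨⟨J, J, hJJ, hJJ⟩, rfl⟩)
  have hne : X.rank ≠ r := by
    intro h
    refine skew_rank_not_odd (J * X) ?_ (by rw [hrk, h]; exact hodd)
    rw [transpose_mul, hJt, hXt]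
  omega
end
end
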